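/- arXiv:1809.04645 — 14 statements merged into one kernel-verified Lean document; each statement's English description precedes it below -/
import Mathlib

section
/- Let 𝒫 = C₂ * C₃ be the free product of a cyclic group C₂ of order 2 (with generator s) and a cyclic group C₃ of order 3 (with generator t). Then there exists a group isomorphism φ : 𝒫 ≃ PSL₂(ℤ) such that φ(s) is the class of σ and φ(t) is the class of τ in PSL₂(ℤ). In particular, PSL₂(ℤ) has the presentation ⟨σ, τ | σ² = τ³ = 1⟩. -/
/-- The element `σ = [[0,-1],[1,0]]` of `SL₂(ℤ)`. -/
def sigmaSL2 : Matrix.SpecialLinearGroup (Fin 2) ℤ :=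
  ⟨!![0, -1; 1, 0], by norm_num [Matrix.det_fin_two_of]⟩

/-- The element `τ = [[-1,1],[-1,0]]` of `SL₂(ℤ)`. -/
def tauSL2 : Matrix.SpecialLinearGroup (Fin 2) ℤ :=
  ⟨!![-1, 1; -1, 0], by norm_num [Matrix.det_fin_two_of]⟩

/-!
The homomorphism `C₂ * C₃ → PSL₂(ℤ)` sending the generators to `σ` and `τ` is surjective because
`S = σ` and `T = τσ` generate `SL₂(ℤ)`. It is injective by ping-pong: `PSL₂(ℤ)` acts on
`ℚ ∪ {∞}` by `σ z = -1 / z`, `τ z = 1 - 1 / z` and `τ² z = 1 / (1 - z)`, so `σ` exchanges positive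
and negative numbers while `τ` and `τ²` send negative numbers to positive ones. These two sets are
pulled back to `PSL₂(ℤ)` along the orbit map `A ↦ A ∞`.
-/

section PingPong

open scoped Pointwise Cardinal

universe u

variable {G H : Type u} [Group G] [Group H] {K : Type*} [Group K]

/-- The pair of groups `G`, `H` as a family indexed by `Bool`, which makes results on the indexed
free product `Monoid.CoprodI` available for the binary one; this forces `G` and `H` into the same
universe. -/
abbrev PairFamily (G H : Type u) (b : Bool) : Type u := cond b H G

instance PairFamily.instGroup : ∀ b, Group (PairFamily G H b)
  | false => inferInstanceAs (Group G)
  | true => inferInstanceAs (Group H)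

/-- The family of homomorphisms on `PairFamily G H` with members `f : G →* K` and `g : H →* K`. -/
def PairFamily.hom (f : G →* K) (g : H →* K) : ∀ b, PairFamily G H b →* K
  | false => f
  | true => g

/-- The canonical map from the binary free product to the free product of the `Bool`-indexed
family. -/
def coprodToCoprodI : Monoid.Coprod G H →* Monoid.CoprodI (PairFamily G H) :=
  Monoid.Coprod.lift (Monoid.CoprodI.of (M := PairFamily G H) (i := false))
    (Monoid.CoprodI.of (M := PairFamily G H) (i := true))

lemma coprodI_lift_comp_coprodToCoprodI (f : G →* K) (g : H →* K) :
    (Monoid.CoprodI.lift (PairFamily.hom f g)).comp coprodToCoprodI = Monoid.Coprod.lift f g :=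
  Monoid.Coprod.hom_ext
    (MonoidHom.ext fun _ ↦ Monoid.CoprodI.lift_of (PairFamily.hom f g) (i := false) _)
    (MonoidHom.ext fun _ ↦ Monoid.CoprodI.lift_of (PairFamily.hom f g) (i := true) _)

lemma coprodToCoprodI_injective :
    Function.Injective (coprodToCoprodI : Monoid.Coprod G H →* _) := by
  refine Function.LeftInverse.injective
    (g := Monoid.CoprodI.lift (PairFamily.hom Monoid.Coprod.inl Monoid.Coprod.inr)) fun x ↦ ?_
  rw [← MonoidHom.comp_apply, coprodI_lift_comp_coprodToCoprodI, Monoid.Coprod.lift_inl_inr,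
    MonoidHom.id_apply]

theorem coprod_lift_injective_of_ping_pong {α : Type*} [MulAction K α] (f : G →* K) (g : H →* K)
    (hH : 3 ≤ #H) {X Y : Set α} (hX : X.Nonempty) (hXY : Disjoint X Y)
    (hf : ∀ a : G, a ≠ 1 → f a • Y ⊆ X) (hg : ∀ b : H, b ≠ 1 → g b • X ⊆ Y) :
    Function.Injective (Monoid.Coprod.lift f g) := by
  have : Nontrivial H := Cardinal.one_lt_iff_nontrivial.1 (lt_of_lt_of_le (by norm_num) hH)
  obtain ⟨b, hb⟩ := exists_ne (1 : H)
  have hY : Y.Nonempty := (hX.smul_set (a := g b)).mono (hg b hb)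
  rw [← coprodI_lift_comp_coprodToCoprodI, MonoidHom.coe_comp]
  refine Function.Injective.comp ?_ coprodToCoprodI_injective
  refine Monoid.CoprodI.lift_injective_of_ping_pong (PairFamily.hom f g) (Or.inr ⟨true, hH⟩)
    (fun b ↦ cond b Y X) (Bool.forall_bool.2 ⟨hX, hY⟩) ?_ ?_
  · rintro (_ | _) (_ | _) hij
    exacts [absurd rfl hij, hXY, hXY.symm, absurd rfl hij]
  · rintro (_ | _) (_ | _) hij
    exacts [absurd rfl hij, hf, hg, absurd rfl hij]

end PingPong

section CyclicFactors

open scoped Pointwise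

variable {G : Type*} [Group G]

/-- The homomorphism from the multiplicatively written cyclic group `ZMod n` that sends the
generator to a given `g` with `g ^ n = 1`. -/
def zmodPowersHom (n : ℕ) (g : G) (hg : g ^ n = 1) : Multiplicative (ZMod n) →* G :=
  AddMonoidHom.toMultiplicativeLeft <|
    ZMod.lift n ⟨zmultiplesHom (Additive G) (Additive.ofMul g), by
      rw [zmultiplesHom_apply, natCast_zsmul, ← ofMul_pow, hg, ofMul_one]⟩

lemma zmodPowersHom_ofAdd_intCast {n : ℕ} {g : G} (hg : g ^ n = 1) (k : ℤ) :
    zmodPowersHom n g hg (Multiplicative.ofAdd (k : ZMod n)) = g ^ k :=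
  congrArg Additive.toMul (ZMod.lift_coe n _ k)

lemma zmodPowersHom_ofAdd_one {n : ℕ} {g : G} (hg : g ^ n = 1) :
    zmodPowersHom n g hg (Multiplicative.ofAdd 1) = g := by
  simpa using zmodPowersHom_ofAdd_intCast hg 1

lemma range_zmodPowersHom {n : ℕ} {g : G} (hg : g ^ n = 1) :
    (zmodPowersHom n g hg).range = Subgroup.zpowers g := by
  ext x
  rw [MonoidHom.mem_range, Subgroup.mem_zpowers_iff, Multiplicative.ofAdd.surjective.exists,
    ZMod.intCast_surjective.exists]
  simp only [zmodPowersHom_ofAdd_intCast]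

lemma exists_zmodPowersHom_eq_pow {n : ℕ} [NeZero n] {g : G} (hg : g ^ n = 1)
    {a : Multiplicative (ZMod n)} (ha : a ≠ 1) :
    ∃ k, 0 < k ∧ k < n ∧ zmodPowersHom n g hg a = g ^ k := by
  refine ⟨a.toAdd.val, ZMod.val_pos.2 ha, ZMod.val_lt _, ?_⟩
  rw [← zpow_natCast, ← zmodPowersHom_ofAdd_intCast hg, Int.cast_natCast, ZMod.natCast_zmod_val,
    ofAdd_toAdd]

variable {m n : ℕ} {s t : G}

theorem coprod_lift_zmodPowersHom_injective_of_ping_pong {α : Type*} [MulAction G α] [NeZero m]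
    (hn : 3 ≤ n) (hs : s ^ m = 1) (ht : t ^ n = 1) {X Y : Set α} (hX : X.Nonempty)
    (hXY : Disjoint X Y) (hsX : ∀ k, 0 < k → k < m → s ^ k • Y ⊆ X)
    (htY : ∀ k, 0 < k → k < n → t ^ k • X ⊆ Y) :
    Function.Injective (Monoid.Coprod.lift (zmodPowersHom m s hs) (zmodPowersHom n t ht)) := by
  have : NeZero n := ⟨by lia⟩
  have hcard : 3 ≤ Cardinal.mk (Multiplicative (ZMod n)) := by
    rw [Cardinal.mk_fintype, Fintype.card_multiplicative, ZMod.card]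
    exact_mod_cast hn
  refine coprod_lift_injective_of_ping_pong _ _ hcard hX hXY (fun a ha ↦ ?_) (fun b hb ↦ ?_)
  · obtain ⟨k, hk, hkm, hak⟩ := exists_zmodPowersHom_eq_pow hs ha
    exact hak ▸ hsX k hk hkm
  · obtain ⟨k, hk, hkn, hbk⟩ := exists_zmodPowersHom_eq_pow ht hb
    exact hbk ▸ htY k hk hkn

theorem coprod_lift_zmodPowersHom_surjective (hs : s ^ m = 1) (ht : t ^ n = 1)
    (hst : Subgroup.closure {s, t} = ⊤) :
    Function.Surjective (Monoid.Coprod.lift (zmodPowersHom m s hs) (zmodPowersHom n t ht)) := by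
  rw [← MonoidHom.range_eq_top, Monoid.Coprod.range_lift, range_zmodPowersHom, range_zmodPowersHom,
    Subgroup.zpowers_eq_closure, Subgroup.zpowers_eq_closure, ← Subgroup.closure_union,
    Set.singleton_union, hst]

end CyclicFactors

section ModularGroup

open scoped MatrixGroups Pointwise

lemma sigmaSL2_sq : sigmaSL2 ^ 2 = -1 := by
  decide

lemma tauSL2_pow_three : tauSL2 ^ 3 = 1 := by
  decide

lemma sigmaSL2_eq_S : sigmaSL2 = ModularGroup.S := rfl

lemma tauSL2_mul_sigmaSL2_eq_T : tauSL2 * sigmaSL2 = ModularGroup.T := by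
  decide

lemma closure_sigmaSL2_tauSL2 : Subgroup.closure {sigmaSL2, tauSL2} = ⊤ := by
  have hσ : sigmaSL2 ∈ Subgroup.closure {sigmaSL2, tauSL2} :=
    Subgroup.subset_closure (Set.mem_insert _ _)
  have hτ : tauSL2 ∈ Subgroup.closure {sigmaSL2, tauSL2} :=
    Subgroup.subset_closure (Set.mem_insert_of_mem _ rfl)
  rw [eq_top_iff, ← SpecialLinearGroup.SL2Z_generators, Subgroup.closure_le, ← sigmaSL2_eq_S,
    ← tauSL2_mul_sigmaSL2_eq_T, Set.pair_subset_iff]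
  exact ⟨hσ, mul_mem hτ hσ⟩

lemma closure_mk_sigmaSL2_mk_tauSL2 :
    Subgroup.closure {(sigmaSL2 : PSL(2, ℤ)), (tauSL2 : PSL(2, ℤ))} = ⊤ := by
  have h := congrArg (Subgroup.map (QuotientGroup.mk' (Subgroup.center SL(2, ℤ))))
    closure_sigmaSL2_tauSL2
  rwa [MonoidHom.map_closure, Set.image_pair,
    Subgroup.map_top_of_surjective _ (QuotientGroup.mk'_surjective _)] at h

lemma mk_sigmaSL2_sq : (sigmaSL2 : PSL(2, ℤ)) ^ 2 = 1 := by
  rw [← QuotientGroup.mk_pow, sigmaSL2_sq, QuotientGroup.eq_one_iff]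
  exact Subgroup.mem_center_iff.2 fun A ↦ by rw [mul_neg_one, neg_one_mul]

lemma mk_tauSL2_pow_three : (tauSL2 : PSL(2, ℤ)) ^ 3 = 1 := by
  rw [← QuotientGroup.mk_pow, tauSL2_pow_three, QuotientGroup.mk_one]

variable {R : Type*} [CommRing R]

lemma fst_col_prod_mul_of_mem_center (A : SL(2, R)) {Z : SL(2, R)}
    (hZ : Z ∈ Subgroup.center SL(2, R)) : (A * Z) 0 0 * (A * Z) 1 0 = A 0 0 * A 1 0 := by
  obtain ⟨r, hr, hrZ⟩ := Matrix.SpecialLinearGroup.mem_center_iff.1 hZ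
  have hcol (i : Fin 2) : (A * Z) i 0 = A i 0 * r := by
    rw [Matrix.SpecialLinearGroup.coe_mul, ← hrZ, Matrix.scalar_apply, Matrix.mul_diagonal]
  rw [Fintype.card_fin] at hr
  rw [hcol, hcol]
  linear_combination A 0 0 * A 1 0 * hr

/-- The product `a * c` of the entries of the first column of `[[a, b], [c, d]]`, as a function on
`PSL(2, R)`. Over `ℤ` it has the sign of the image `a / c` of `∞` under the Möbius action, and it
vanishes when that image is `0` or `∞`. -/
def fstColProd : PSL(2, R) → R :=
  Quotient.lift (fun A : SL(2, R) ↦ A 0 0 * A 1 0) fun A B hAB ↦ by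
    have hZ := fst_col_prod_mul_of_mem_center A (QuotientGroup.leftRel_apply.1 hAB)
    rw [mul_inv_cancel_left] at hZ
    exact hZ.symm

lemma fstColProd_mk (A : SL(2, R)) : fstColProd (A : PSL(2, R)) = A 0 0 * A 1 0 := rfl

lemma sigmaSL2_mul_apply_zero_zero (A : SL(2, ℤ)) : (sigmaSL2 * A) 0 0 = -A 1 0 := by
  rw [Matrix.SpecialLinearGroup.coe_mul, Matrix.mul_apply, Fin.sum_univ_two]
  simp [sigmaSL2]

lemma sigmaSL2_mul_apply_one_zero (A : SL(2, ℤ)) : (sigmaSL2 * A) 1 0 = A 0 0 := by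
  rw [Matrix.SpecialLinearGroup.coe_mul, Matrix.mul_apply, Fin.sum_univ_two]
  simp [sigmaSL2]

lemma tauSL2_mul_apply_zero_zero (A : SL(2, ℤ)) : (tauSL2 * A) 0 0 = -A 0 0 + A 1 0 := by
  rw [Matrix.SpecialLinearGroup.coe_mul, Matrix.mul_apply, Fin.sum_univ_two]
  simp [tauSL2]

lemma tauSL2_mul_apply_one_zero (A : SL(2, ℤ)) : (tauSL2 * A) 1 0 = -A 0 0 := by
  rw [Matrix.SpecialLinearGroup.coe_mul, Matrix.mul_apply, Fin.sum_univ_two]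
  simp [tauSL2]

lemma fstColProd_sigmaSL2_mul (x : PSL(2, ℤ)) :
    fstColProd ((sigmaSL2 : PSL(2, ℤ)) * x) = -fstColProd x := by
  obtain ⟨A, rfl⟩ := QuotientGroup.mk_surjective x
  rw [← QuotientGroup.mk_mul, fstColProd_mk, fstColProd_mk, sigmaSL2_mul_apply_zero_zero,
    sigmaSL2_mul_apply_one_zero]
  ring

lemma fstColProd_tauSL2_mul_mk (A : SL(2, ℤ)) :
    fstColProd ((tauSL2 : PSL(2, ℤ)) * (A : PSL(2, ℤ))) = A 0 0 ^ 2 - A 0 0 * A 1 0 := by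
  rw [← QuotientGroup.mk_mul, fstColProd_mk, tauSL2_mul_apply_zero_zero,
    tauSL2_mul_apply_one_zero]
  ring

lemma fstColProd_tauSL2_sq_mul_mk (A : SL(2, ℤ)) :
    fstColProd ((tauSL2 : PSL(2, ℤ)) ^ 2 * (A : PSL(2, ℤ))) = A 1 0 ^ 2 - A 0 0 * A 1 0 := by
  rw [pow_two, mul_assoc, ← QuotientGroup.mk_mul, fstColProd_tauSL2_mul_mk,
    tauSL2_mul_apply_zero_zero, tauSL2_mul_apply_one_zero]
  ring

lemma fstColProd_tauSL2_pow_mul_pos {k : ℕ} (hk : 0 < k) (hk3 : k < 3) {x : PSL(2, ℤ)}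
    (hx : fstColProd x < 0) : 0 < fstColProd ((tauSL2 : PSL(2, ℤ)) ^ k * x) := by
  obtain ⟨A, rfl⟩ := QuotientGroup.mk_surjective x
  rw [fstColProd_mk] at hx
  interval_cases k
  · rw [pow_one, fstColProd_tauSL2_mul_mk]
    linarith [sq_nonneg (A 0 0)]
  · rw [fstColProd_tauSL2_sq_mul_mk]
    linarith [sq_nonneg (A 1 0)]

lemma fstColProd_mk_tauSL2 : fstColProd (tauSL2 : PSL(2, ℤ)) = 1 := by
  rw [fstColProd_mk]
  decide

theorem coprod_lift_sigmaSL2_tauSL2_injective :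
    Function.Injective (Monoid.Coprod.lift (zmodPowersHom 2 (sigmaSL2 : PSL(2, ℤ)) mk_sigmaSL2_sq)
      (zmodPowersHom 3 (tauSL2 : PSL(2, ℤ)) mk_tauSL2_pow_three)) := by
  refine coprod_lift_zmodPowersHom_injective_of_ping_pong le_rfl mk_sigmaSL2_sq mk_tauSL2_pow_three
    (X := {x : PSL(2, ℤ) | fstColProd x < 0}) (Y := {x : PSL(2, ℤ) | 0 < fstColProd x})
    ⟨(sigmaSL2 : PSL(2, ℤ)) * (tauSL2 : PSL(2, ℤ)), ?_⟩
    (Set.disjoint_left.2 fun x (hX : fstColProd x < 0) ↦ hX.not_gt) ?_ ?_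
  · rw [Set.mem_ofPred_eq, fstColProd_sigmaSL2_mul, fstColProd_mk_tauSL2]
    exact neg_one_lt_zero
  · rintro k hk hk2 _ ⟨x, hx, rfl⟩
    obtain rfl : k = 1 := by lia
    simpa [fstColProd_sigmaSL2_mul] using hx
  · rintro k hk hk3 _ ⟨x, hx, rfl⟩
    exact fstColProd_tauSL2_pow_mul_pos hk hk3 hx

end ModularGroup

/-- `PSL₂(ℤ) = SL₂(ℤ)/{±1}` is the free product of the cyclic group of order `2`
generated by (the class of) `σ` and the cyclic group of order `3` generated by
(the class of) `τ`; i.e. `PSL₂(ℤ) = ⟨σ, τ | σ² = τ³ = 1⟩`. -/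
theorem PSL2Z_isFreeProduct_C2_C3 :
    ∃ φ : Monoid.Coprod (Multiplicative (ZMod 2)) (Multiplicative (ZMod 3)) ≃*
        Matrix.SpecialLinearGroup (Fin 2) ℤ ⧸
          Subgroup.center (Matrix.SpecialLinearGroup (Fin 2) ℤ),
      φ (Monoid.Coprod.inl (Multiplicative.ofAdd (1 : ZMod 2))) = QuotientGroup.mk sigmaSL2 ∧
      φ (Monoid.Coprod.inr (Multiplicative.ofAdd (1 : ZMod 3))) = QuotientGroup.mk tauSL2 := by
  have hbij : Function.Bijective _ := ⟨coprod_lift_sigmaSL2_tauSL2_injective,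
    coprod_lift_zmodPowersHom_surjective mk_sigmaSL2_sq mk_tauSL2_pow_three
      closure_mk_sigmaSL2_mk_tauSL2⟩
  exact ⟨MulEquiv.ofBijective _ hbij, zmodPowersHom_ofAdd_one mk_sigmaSL2_sq,
    zmodPowersHom_ofAdd_one mk_tauSL2_pow_three⟩
end

section
/- Let R be a commutative ring, G₁ and G₂ groups, and G = G₁ * G₂ their free product; identify G₁ and G₂ with their images in G under the canonical inclusions. Let α : R[G] → R[G/G₁] ⊕ R[G/G₂] be the R-linear map determined by α(g) = (gG₁, −gG₂) for g ∈ G, and let ε : R[G/G₁] ⊕ R[G/G₂] → R be the R-linear map determined by ε(gG₁, 0) = 1 = ε(0, gG₂). Then the sequence 0 → R[G] → R[G/G₁] ⊕ R[G/G₂] → R → 0 is exact: α is injective, the kernel of ε equals the image of α, and ε is surjective. -/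
open Monoid

/-!
The cosets `gG₁` and `gG₂` are the vertices of the Bass–Serre tree of `G₁ * G₂`, and each `g` is an
edge joining `gG₁` to `gG₂`; the sequence is the augmented cellular chain complex of this tree.
Exactness in the middle expresses that the tree is connected, which only needs that `G₁` and `G₂`
generate `G`. Injectivity of `α` expresses that it has no cycles: by the universal property of the
free product every function `F` on edges, with values in any group, is the difference of a function
on `G/G₁` and a function on `G/G₂`, and for `F g = g ∈ R[G]` such potentials assemble into a left
inverse of `α`.
-/

section CosetComplex

variable (R : Type*) [Ring R] {G : Type*} [Group G] (H K : Subgroup G)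

/-- The boundary map `R[G] → R[G/H] ⊕ R[G/K]`, `g ↦ (gH, -gK)`, of the coset graph whose vertices
are the left cosets of `H` and `K` and whose edges are the elements of `G`. -/
noncomputable def cosetBoundary : MonoidAlgebra R G →ₗ[R] ((G ⧸ H) →₀ R) × ((G ⧸ K) →₀ R) :=
  ((Finsupp.lmapDomain R R QuotientGroup.mk).prod (-Finsupp.lmapDomain R R QuotientGroup.mk)) ∘ₗ
    (MonoidAlgebra.coeffLinearEquiv R).toLinearMap

/-- The augmentation `R[G/H] ⊕ R[G/K] → R` of the coset graph, sending every coset to `1`. -/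
noncomputable def cosetAugmentation : ((G ⧸ H) →₀ R) × ((G ⧸ K) →₀ R) →ₗ[R] R :=
  (Finsupp.linearCombination R 1).coprod (Finsupp.linearCombination R 1)

variable {R H K}

@[simp]
theorem cosetBoundary_single (g : G) (r : R) :
    cosetBoundary R H K (MonoidAlgebra.single g r) =
      (Finsupp.single (QuotientGroup.mk g) r, -Finsupp.single (QuotientGroup.mk g) r) := by
  simp [cosetBoundary]

@[simp]
theorem cosetAugmentation_apply_single_left (x : G ⧸ H) (r : R) :
    cosetAugmentation R H K (Finsupp.single x r, 0) = r := by
  simp [cosetAugmentation]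

@[simp]
theorem cosetAugmentation_apply_single_right (x : G ⧸ K) (r : R) :
    cosetAugmentation R H K (0, Finsupp.single x r) = r := by
  simp [cosetAugmentation]

theorem eq_cosetBoundary {α : MonoidAlgebra R G →ₗ[R] ((G ⧸ H) →₀ R) × ((G ⧸ K) →₀ R)}
    (hα : ∀ g : G, α (MonoidAlgebra.single g 1) =
      (Finsupp.single (QuotientGroup.mk g) 1, -Finsupp.single (QuotientGroup.mk g) 1)) :
    α = cosetBoundary R H K :=
  MonoidAlgebra.lhom_ext' fun g => LinearMap.ext_ring <| by simp [hα]

theorem eq_cosetAugmentation {ε : ((G ⧸ H) →₀ R) × ((G ⧸ K) →₀ R) →ₗ[R] R}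
    (hε₁ : ∀ x : G ⧸ H, ε (Finsupp.single x 1, 0) = 1)
    (hε₂ : ∀ x : G ⧸ K, ε (0, Finsupp.single x 1) = 1) :
    ε = cosetAugmentation R H K :=
  LinearMap.prod_ext (Finsupp.lhom_ext' fun x => LinearMap.ext_ring <| by simp [hε₁])
    (Finsupp.lhom_ext' fun x => LinearMap.ext_ring <| by simp [hε₂])

theorem cosetAugmentation_surjective : Function.Surjective (cosetAugmentation R H K) :=
  fun r => ⟨(Finsupp.single (QuotientGroup.mk 1) r, 0), cosetAugmentation_apply_single_left _ r⟩

theorem cosetAugmentation_comp_cosetBoundary :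
    cosetAugmentation R H K ∘ₗ cosetBoundary R H K = 0 :=
  MonoidAlgebra.lhom_ext' fun g => LinearMap.ext_ring <| by simp [cosetAugmentation]

theorem coset_function_eq_of_sup_eq_top {X : Type*} (hHK : H ⊔ K = ⊤) {u : G ⧸ H → X}
    {v : G ⧸ K → X} (huv : ∀ g : G, u g = v g) (g : G) : u g = u (1 : G) := by
  let S : Subgroup G :=
    { carrier := {s | ∀ a : G, u (a * s : G) = u a}
      one_mem' := by simp
      mul_mem' := fun {s t} hs ht a => by rw [← mul_assoc, ht, hs]
      inv_mem' := fun {s} hs a => by simpa using (hs (a * s⁻¹)).symm }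
  have hH : H ≤ S := fun s hs a => by rw [QuotientGroup.mk_mul_of_mem a hs]
  have hK : K ≤ S := fun s hs a => by rw [huv, huv, QuotientGroup.mk_mul_of_mem a hs]
  have hg : g ∈ S := sup_le hH hK (hHK ▸ Subgroup.mem_top g)
  simpa using hg 1

theorem eq_toSpanSingleton_comp_cosetAugmentation {M : Type*} [AddCommGroup M] [Module R M]
    (hHK : H ⊔ K = ⊤) {φ : ((G ⧸ H) →₀ R) × ((G ⧸ K) →₀ R) →ₗ[R] M}
    (hφ : φ ∘ₗ cosetBoundary R H K = 0) :
    φ = LinearMap.toSpanSingleton R M (φ (Finsupp.single (QuotientGroup.mk 1) 1, 0)) ∘ₗ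
      cosetAugmentation R H K := by
  have endpoints_eq (g : G) : φ (Finsupp.single (g : G ⧸ H) 1, 0) =
      φ (0, Finsupp.single (g : G ⧸ K) 1) := by
    rw [← sub_eq_zero, ← map_sub]
    simpa using LinearMap.congr_fun hφ (MonoidAlgebra.single g 1)
  have eq_base (g : G) : φ (Finsupp.single (g : G ⧸ H) 1, 0) =
      φ (Finsupp.single (QuotientGroup.mk 1) 1, 0) :=
    coset_function_eq_of_sup_eq_top hHK (u := fun x => φ (Finsupp.single x 1, 0))
      (v := fun x => φ (0, Finsupp.single x 1)) endpoints_eq g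
  refine LinearMap.prod_ext (Finsupp.lhom_ext' fun x => LinearMap.ext_ring ?_)
    (Finsupp.lhom_ext' fun x => LinearMap.ext_ring ?_) <;>
    obtain ⟨g, rfl⟩ := QuotientGroup.mk_surjective x
  · simpa using eq_base g
  · simpa using (endpoints_eq g).symm.trans (eq_base g)

theorem ker_cosetAugmentation (hHK : H ⊔ K = ⊤) :
    LinearMap.ker (cosetAugmentation R H K) = LinearMap.range (cosetBoundary R H K) := by
  refine le_antisymm ?_ (LinearMap.range_le_ker_iff.mpr cosetAugmentation_comp_cosetBoundary)
  have factor := eq_toSpanSingleton_comp_cosetAugmentation hHK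
    (LinearMap.range_mkQ_comp (cosetBoundary R H K))
  calc LinearMap.ker (cosetAugmentation R H K)
      ≤ LinearMap.ker (LinearMap.range (cosetBoundary R H K)).mkQ :=
        factor ▸ LinearMap.ker_le_ker_comp _ _
    _ = LinearMap.range (cosetBoundary R H K) := Submodule.ker_mkQ _

theorem cosetBoundary_injective_of_potential {u : G ⧸ H → MonoidAlgebra R G}
    {v : G ⧸ K → MonoidAlgebra R G} (huv : ∀ g : G, u g - v g = MonoidAlgebra.single g 1) :
    Function.Injective (cosetBoundary R H K) := by
  let β := (Finsupp.linearCombination R u).coprod (Finsupp.linearCombination R v)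
  have left_inverse : β ∘ₗ cosetBoundary R H K = LinearMap.id :=
    MonoidAlgebra.lhom_ext' fun g => LinearMap.ext_ring <| by
      simpa [β, sub_eq_add_neg] using huv g
  exact LinearMap.injective_of_comp_eq_id _ _ left_inverse

end CosetComplex

section Potential

/-- Left translation of the first coordinate, as a homomorphism `G → Perm (G × A)`. -/
def fstTranslation (G A : Type*) [Group G] : G →* Equiv.Perm (G × A) where
  toFun g := (Equiv.mulLeft g).prodCongr (Equiv.refl A)
  map_one' := by ext <;> simp
  map_mul' g h := by ext <;> simp [mul_assoc]

variable {G₁ G₂ A : Type*} [Group G₁] [Group G₂] [AddGroup A] (F : Coprod G₁ G₂ → A)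

/-- The action of `G₁ * G₂` on `(G₁ * G₂) × A` in which `G₁` translates the first coordinate, and
`G₂` does so after the change of coordinates `(g, a) ↦ (g, F g + a)`. The orbit of `(1, 0)` is the
graph of a left `G₁`-invariant function `f` for which `-F + f` is left `G₂`-invariant. -/
def shearedTranslation : Coprod G₁ G₂ →* Equiv.Perm (Coprod G₁ G₂ × A) :=
  let shear : Equiv.Perm (Coprod G₁ G₂ × A) :=
    (Equiv.refl _).prodShear fun g => Equiv.addLeft (F g)
  Coprod.lift ((fstTranslation _ A).comp Coprod.inl)
    ((MulAut.conj shear).toMonoidHom.comp ((fstTranslation _ A).comp Coprod.inr))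

theorem shearedTranslation_inl (h : G₁) (p : Coprod G₁ G₂ × A) :
    shearedTranslation F (Coprod.inl h) p = (Coprod.inl h * p.1, p.2) := by
  simp [shearedTranslation, fstTranslation, Prod.map]

theorem shearedTranslation_inr (k : G₂) (p : Coprod G₁ G₂ × A) :
    shearedTranslation F (Coprod.inr k) p =
      (Coprod.inr k * p.1, F (Coprod.inr k * p.1) + (-F p.1 + p.2)) := by
  simp [shearedTranslation, fstTranslation, Equiv.prodShear]

theorem shearedTranslation_apply_fst (g : Coprod G₁ G₂) (p : Coprod G₁ G₂ × A) :
    (shearedTranslation F g p).1 = g * p.1 := by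
  induction g using Coprod.induction_on generalizing p with
  | inl h => rw [shearedTranslation_inl]
  | inr k => rw [shearedTranslation_inr]
  | mul g g' hg hg' => rw [map_mul, Equiv.Perm.mul_apply, hg, hg', mul_assoc]

theorem exists_left_invariant_potential : ∃ f : Coprod G₁ G₂ → A,
    (∀ h g, f (Coprod.inl h * g) = f g) ∧
      ∀ k g, -F (Coprod.inr k * g) + f (Coprod.inr k * g) = -F g + f g := by
  refine ⟨fun g => (shearedTranslation F g (1, 0)).2, fun h g => ?_, fun k g => ?_⟩
  · simp only [map_mul, Equiv.Perm.mul_apply, shearedTranslation_inl]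
  · simp only [map_mul, Equiv.Perm.mul_apply, shearedTranslation_inr,
      shearedTranslation_apply_fst, mul_one, neg_add_cancel_left]

theorem exists_coset_potential :
    ∃ (u : Coprod G₁ G₂ ⧸ (Coprod.inl : G₁ →* Coprod G₁ G₂).range → A)
      (v : Coprod G₁ G₂ ⧸ (Coprod.inr : G₂ →* Coprod G₁ G₂).range → A),
      ∀ g : Coprod G₁ G₂, u g - v g = F g := by
  -- Inversion turns left invariance into invariance on left cosets.
  obtain ⟨f, hf₁, hf₂⟩ := exists_left_invariant_potential fun g => F g⁻¹
  refine ⟨Quotient.lift (fun g => f g⁻¹) ?_, Quotient.lift (fun g => -F g + f g⁻¹) ?_,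
    fun g => ?_⟩
  · intro a b hab
    obtain ⟨h, hh⟩ := QuotientGroup.leftRel_apply.mp hab
    obtain rfl : b = a * Coprod.inl h := by rw [hh, mul_inv_cancel_left]
    simpa using (hf₁ h⁻¹ a⁻¹).symm
  · intro a b hab
    obtain ⟨k, hk⟩ := QuotientGroup.leftRel_apply.mp hab
    obtain rfl : b = a * Coprod.inr k := by rw [hk, mul_inv_cancel_left]
    simpa using (hf₂ k⁻¹ a⁻¹).symm
  · change f g⁻¹ - (-F g + f g⁻¹) = F g
    rw [sub_eq_add_neg, neg_add_rev, neg_neg, add_neg_cancel_left]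

end Potential

theorem free_product_coset_sequence_exact_general
    (R : Type*) [Ring R] (G₁ G₂ : Type*) [Group G₁] [Group G₂]
    (α : MonoidAlgebra R (Coprod G₁ G₂) →ₗ[R]
        ((Coprod G₁ G₂ ⧸ (Coprod.inl : G₁ →* Coprod G₁ G₂).range) →₀ R) ×
        ((Coprod G₁ G₂ ⧸ (Coprod.inr : G₂ →* Coprod G₁ G₂).range) →₀ R))
    (hα : ∀ g : Coprod G₁ G₂,
      α (MonoidAlgebra.single g 1) =
        (Finsupp.single (QuotientGroup.mk g) 1, -Finsupp.single (QuotientGroup.mk g) 1))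
    (ε : (((Coprod G₁ G₂ ⧸ (Coprod.inl : G₁ →* Coprod G₁ G₂).range) →₀ R) ×
        ((Coprod G₁ G₂ ⧸ (Coprod.inr : G₂ →* Coprod G₁ G₂).range) →₀ R)) →ₗ[R] R)
    (hε₁ : ∀ x : Coprod G₁ G₂ ⧸ (Coprod.inl : G₁ →* Coprod G₁ G₂).range,
      ε (Finsupp.single x 1, 0) = 1)
    (hε₂ : ∀ x : Coprod G₁ G₂ ⧸ (Coprod.inr : G₂ →* Coprod G₁ G₂).range,
      ε (0, Finsupp.single x 1) = 1) :
    Function.Injective α ∧ LinearMap.ker ε = LinearMap.range α ∧ Function.Surjective ε := by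
  obtain rfl := eq_cosetBoundary hα
  obtain rfl := eq_cosetAugmentation hε₁ hε₂
  obtain ⟨u, v, huv⟩ :=
    exists_coset_potential fun g : Coprod G₁ G₂ => MonoidAlgebra.single g (1 : R)
  exact ⟨cosetBoundary_injective_of_potential huv,
    ker_cosetAugmentation Coprod.range_inl_sup_range_inr, cosetAugmentation_surjective⟩

/-- For a free product `G = G₁ * G₂`, the sequence
`0 → R[G] → R[G/G₁] ⊕ R[G/G₂] → R → 0`, where the first map sends `g` to `(gG₁, -gG₂)` and
the second sends each coset to `1`, is exact: the first map is injective, the kernel of the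
second map is the image of the first one, and the second map is surjective. -/
theorem free_product_coset_sequence_exact
    (R : Type*) [CommRing R] (G₁ G₂ : Type*) [Group G₁] [Group G₂]
    (α : MonoidAlgebra R (Coprod G₁ G₂) →ₗ[R]
        ((Coprod G₁ G₂ ⧸ (Coprod.inl : G₁ →* Coprod G₁ G₂).range) →₀ R) ×
        ((Coprod G₁ G₂ ⧸ (Coprod.inr : G₂ →* Coprod G₁ G₂).range) →₀ R))
    (hα : ∀ g : Coprod G₁ G₂,
      α (MonoidAlgebra.single g 1) =
        (Finsupp.single (QuotientGroup.mk g) 1, -Finsupp.single (QuotientGroup.mk g) 1))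
    (ε : (((Coprod G₁ G₂ ⧸ (Coprod.inl : G₁ →* Coprod G₁ G₂).range) →₀ R) ×
        ((Coprod G₁ G₂ ⧸ (Coprod.inr : G₂ →* Coprod G₁ G₂).range) →₀ R)) →ₗ[R] R)
    (hε₁ : ∀ x : Coprod G₁ G₂ ⧸ (Coprod.inl : G₁ →* Coprod G₁ G₂).range,
      ε (Finsupp.single x 1, 0) = 1)
    (hε₂ : ∀ x : Coprod G₁ G₂ ⧸ (Coprod.inr : G₂ →* Coprod G₁ G₂).range,
      ε (0, Finsupp.single x 1) = 1) :
    Function.Injective α ∧ LinearMap.ker ε = LinearMap.range α ∧ Function.Surjective ε :=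
  free_product_coset_sequence_exact_general R G₁ G₂ α hα ε hε₁ hε₂
end

section
/- Let R be a commutative ring, G₁ and G₂ groups, G = G₁ * G₂ their free product, and M a representation of G over R. For every n ≥ 2 the map Hⁿ(G, M) → Hⁿ(G₁, M) × Hⁿ(G₂, M), whose components are the restriction maps in group cohomology along the canonical inclusions G₁ → G and G₂ → G, is bijective; for n = 1 this map is surjective. -/
open CategoryTheory

universe u

variable {k G H : Type u} [CommRing k] [Group G] [Group H]

lemma MonoidHom.comp_contractNth (f : H →* G) {n : ℕ} (j : Fin (n + 1)) (x : Fin (n + 1) → H) :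
    ⇑f ∘ Fin.contractNth j (· * ·) x = Fin.contractNth j (· * ·) (⇑f ∘ x) := by
  funext i
  simp only [Function.comp_apply, Fin.contractNth]
  split_ifs <;> simp

/-- The restriction of inhomogeneous cochains along a group homomorphism `f : H →* G`:
a cochain `c : Gⁿ → A` is sent to the cochain `Hⁿ → A`, `x ↦ c (f ∘ x)`, where `H` acts on
`A` via `f`. -/
noncomputable def cochainsRes (f : H →* G) (A : Rep k G) :
    groupCohomology.inhomogeneousCochains A ⟶
      groupCohomology.inhomogeneousCochains (Rep.of (A.ρ.comp f)) where
  f n := ModuleCat.ofHom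
    { toFun := fun c x => c (⇑f ∘ x)
      map_add' := fun _ _ => rfl
      map_smul' := fun _ _ => rfl }
  comm' := by
    rintro i j (rfl : i + 1 = j)
    rw [groupCohomology.inhomogeneousCochains.d_def, groupCohomology.inhomogeneousCochains.d_def]
    ext c x
    show inhomogeneousCochains.d (Rep.of (A.ρ.comp f)) i (fun y => c (⇑f ∘ y)) x
        = inhomogeneousCochains.d A i c (⇑f ∘ x)
    simp only [inhomogeneousCochains.d_hom_apply, Function.comp_apply, Rep.of_ρ,
      MonoidHom.comp_apply, MonoidHom.comp_contractNth]
    rfl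

/-- The restriction map `Hⁿ(G, A) → Hⁿ(H, A)` in group cohomology along a group
homomorphism `f : H →* G`, where `H` acts on `A` via `f`. -/
noncomputable def cohomologyRes (f : H →* G) (A : Rep k G) (n : ℕ) :
    groupCohomology A n ⟶ groupCohomology (Rep.of (A.ρ.comp f)) n :=
  HomologicalComplex.homologyMap (cochainsRes f A) n
/-!
Embed `M` into the coinduced module `I` of functions `G → M` and let `Q` be the quotient. Since
`G₁` and `G₂` are retracts of `G = G₁ * G₂`, the module `I` is acyclic for `G`, `G₁` and `G₂`, and
the connecting maps, which commute with restriction, reduce degree `n + 2` for `M` to degree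
`n + 1` for `Q`. In degree one, a 1-cocycle is the translation part of an affine action, so by the
universal property of `G₁ * G₂` a pair of cocycles on `G₁` and `G₂` comes from a unique cocycle on
`G`; this gives surjectivity, and shows that injectivity amounts to `A = A^{G₁} + A^{G₂}`. This
equality holds for `A = I` because `H¹(G, I) = 0`, and it passes to the quotient `Q`.
-/


open Limits Monoid groupCohomology

namespace FreeProductCohomology

section DimensionShift

lemma δ_comp_cohomologyRes (f : H →* G) {X : ShortComplex (Rep k G)} (hX : X.ShortExact)
    {i j : ℕ} (hij : i + 1 = j) :
    δ hX i j hij ≫ cohomologyRes f X.X₁ j =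
      cohomologyRes f X.X₃ i ≫ δ ((Rep.shortExact_res f).2 hX) i j hij :=
  HomologicalComplex.HomologySequence.δ_naturality
    (S₁ := X.map (cochainsFunctor k G))
    (S₂ := (X.map (Rep.resFunctor f)).map (cochainsFunctor k H))
    { τ₁ := cochainsRes f X.X₁
      τ₂ := cochainsRes f X.X₂
      τ₃ := cochainsRes f X.X₃
      comm₁₂ := rfl
      comm₂₃ := rfl }
    (map_cochainsFunctor_shortExact hX)
    (map_cochainsFunctor_shortExact ((Rep.shortExact_res f).2 hX)) i j hij

variable {H₁ H₂ : Type u} [Group H₁] [Group H₂] (f₁ : H₁ →* G) (f₂ : H₂ →* G)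

/-- The joint restriction map `Hⁿ(G, A) → Hⁿ(H₁, A) × Hⁿ(H₂, A)` along two group homomorphisms
`f₁ : H₁ →* G` and `f₂ : H₂ →* G`. -/
noncomputable def cohomologyResProd (A : Rep k G) (n : ℕ) :
    groupCohomology A n →ₗ[k]
      groupCohomology (Rep.of (A.ρ.comp f₁)) n × groupCohomology (Rep.of (A.ρ.comp f₂)) n :=
  (cohomologyRes f₁ A n).hom.prod (cohomologyRes f₂ A n).hom

lemma δ_bijective_of_isZero {X : ShortComplex (Rep k G)} (hX : X.ShortExact) {n : ℕ}
    (h : IsZero (groupCohomology X.X₂ n)) (h' : IsZero (groupCohomology X.X₂ (n + 1))) :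
    Function.Bijective (δ hX n (n + 1) rfl) :=
  have := isIso_δ_of_isZero hX n h h'
  ConcreteCategory.bijective_of_isIso (δ hX n (n + 1) rfl)

lemma cohomologyResProd_bijective_succ {X : ShortComplex (Rep k G)} (hX : X.ShortExact)
    {n : ℕ}
    (hG : ∀ m, IsZero (groupCohomology X.X₂ (m + 1)))
    (hH₁ : ∀ m, IsZero (groupCohomology (Rep.of (X.X₂.ρ.comp f₁)) (m + 1)))
    (hH₂ : ∀ m, IsZero (groupCohomology (Rep.of (X.X₂.ρ.comp f₂)) (m + 1)))
    (h : Function.Bijective (cohomologyResProd f₁ f₂ X.X₃ (n + 1))) :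
    Function.Bijective (cohomologyResProd f₁ f₂ X.X₁ (n + 2)) := by
  have hδ := δ_bijective_of_isZero hX (hG n) (hG (n + 1))
  have hδ₁ := δ_bijective_of_isZero ((Rep.shortExact_res f₁).2 hX) (hH₁ n) (hH₁ (n + 1))
  have hδ₂ := δ_bijective_of_isZero ((Rep.shortExact_res f₂).2 hX) (hH₂ n) (hH₂ (n + 1))
  have hcomm : ⇑(cohomologyResProd f₁ f₂ X.X₁ (n + 2)) ∘ ⇑(δ hX (n + 1) (n + 2) rfl) =
      Prod.map (δ ((Rep.shortExact_res f₁).2 hX) (n + 1) (n + 2) rfl)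
        (δ ((Rep.shortExact_res f₂).2 hX) (n + 1) (n + 2) rfl) ∘
      ⇑(cohomologyResProd f₁ f₂ X.X₃ (n + 1)) :=
    funext fun x => Prod.ext
      (ConcreteCategory.congr_hom (δ_comp_cohomologyRes f₁ hX rfl) x)
      (ConcreteCategory.congr_hom (δ_comp_cohomologyRes f₂ hX rfl) x)
  rw [← Function.Bijective.of_comp_iff _ hδ, hcomm]
  exact (hδ₁.prodMap hδ₂).comp h

end DimensionShift

section Coinduced

/-- The coinduced representation: `G` acts on the functions `G → V` by `(g • φ) x = φ (x * g)`. -/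
def coindFun (k G V : Type u) [CommRing k] [Group G] [AddCommGroup V] [Module k V] :
    Representation k G (G → V) where
  toFun g := LinearMap.funLeft k V (· * g)
  map_one' := by ext; simp
  map_mul' a b := by ext; simp [mul_assoc]

variable {V : Type u} [AddCommGroup V] [Module k V]

@[simp]
lemma coindFun_apply (g : G) (φ : G → V) (x : G) : coindFun k G V g φ x = φ (x * g) := rfl

/-- The embedding of a representation into the coinduced one on its underlying module, sending `v`
to its orbit map `x ↦ x • v`. -/
def toCoindFun (A : Rep k G) : A ⟶ Rep.of (coindFun k G A) :=
  Rep.ofHom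
    { toLinearMap := LinearMap.pi fun x => A.ρ x
      isIntertwining' g := by
        ext v
        simp }

lemma mono_toCoindFun (A : Rep k G) : Mono (toCoindFun A) :=
  (Rep.mono_iff_injective _).2 fun v w h => by
    simpa [toCoindFun] using congrFun h 1

lemma contractNth_zero_cons {α : Type*} (op : α → α → α) {n : ℕ} (a : α) (x : Fin (n + 1) → α) :
    Fin.contractNth 0 op (Fin.cons a x : Fin (n + 2) → α) =
      Fin.cons (op a (x 0)) (Fin.tail x) := by
  funext i
  cases i using Fin.cases <;> simp [Fin.contractNth, Fin.tail]

lemma contractNth_succ_cons {α : Type*} (op : α → α → α) {n : ℕ} (j : Fin (n + 1)) (a : α)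
    (x : Fin (n + 1) → α) :
    Fin.contractNth j.succ op (Fin.cons a x : Fin (n + 2) → α) =
      Fin.cons a (Fin.contractNth j op x) := by
  funext i
  cases i using Fin.cases <;> simp [Fin.contractNth]

lemma d_cons (A : Rep k G) {n : ℕ} (c : (Fin (n + 1) → G) → A) (g : G) (x : Fin (n + 1) → G) :
    inhomogeneousCochains.d A (n + 1) c (Fin.cons g x) =
      A.ρ g (c x) - c (Fin.cons (g * x 0) (Fin.tail x)) -
        ∑ j : Fin (n + 1),
          (-1 : k) ^ ((j : ℕ) + 1) • c (Fin.cons g (Fin.contractNth j (· * ·) x)) := by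
  rw [inhomogeneousCochains.d_hom_apply, Fin.sum_univ_succ]
  simp [contractNth_zero_cons, contractNth_succ_cons, pow_succ _ (_ + 1), sub_eq_add_neg, add_assoc]

lemma exists_d_eq_of_d_eq_zero (f : H →* G) (p : G → H) (hp : ∀ x h, p (x * f h) = p x * h) {n : ℕ}
    (c : (Fin (n + 1) → H) → (G → V))
    (hc : inhomogeneousCochains.d (Rep.of ((coindFun k G V).comp f)) (n + 1) c = 0) :
    ∃ b, inhomogeneousCochains.d (Rep.of ((coindFun k G V).comp f)) n b = c := by
  -- Contracting homotopy: `x * (f (p x))⁻¹` depends only on the coset of `x` modulo `f H`, so the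
  -- action of `H` moves the extra argument `p x` alone.
  refine ⟨fun h x => c (Fin.cons (p x) h) (x * (f (p x))⁻¹), ?_⟩
  funext h x
  have hcocycle : c h x =
      c (Fin.cons (p x * h 0) (Fin.tail h)) (x * (f (p x))⁻¹) +
        ∑ j : Fin (n + 1), (-1 : k) ^ ((j : ℕ) + 1) •
          c (Fin.cons (p x) (Fin.contractNth j (· * ·) h)) (x * (f (p x))⁻¹) := by
    have := congrFun (congrFun hc (Fin.cons (p x) h)) (x * (f (p x))⁻¹)
    rw [d_cons] at this
    refine sub_eq_zero.1 (Eq.trans ?_ this)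
    simp [sub_sub]
  rw [hcocycle, inhomogeneousCochains.d_hom_apply]
  simp [hp, Fin.tail_def]

lemma isZero_groupCohomology_succ (A : Rep k G) (n : ℕ)
    (h : ∀ c, inhomogeneousCochains.d A (n + 1) c = 0 → ∃ b, inhomogeneousCochains.d A n b = c) :
    IsZero (groupCohomology A (n + 1)) := by
  refine HomologicalComplex.ExactAt.isZero_homology ?_
  rw [HomologicalComplex.exactAt_iff' _ n (n + 1) (n + 2) (by simp) (by simp),
    ShortComplex.moduleCat_exact_iff]
  change ∀ c, (inhomogeneousCochains A).d (n + 1) (n + 2) c = 0 →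
    ∃ b, (inhomogeneousCochains A).d n (n + 1) b = c
  rw [inhomogeneousCochains.d_def, inhomogeneousCochains.d_def]
  exact h

lemma isZero_groupCohomology_coindFun_comp (f : H →* G) (p : G → H)
    (hp : ∀ x h, p (x * f h) = p x * h) (n : ℕ) :
    IsZero (groupCohomology (Rep.of ((coindFun k G V).comp f)) (n + 1)) :=
  isZero_groupCohomology_succ _ n (exists_d_eq_of_d_eq_zero f p hp)

end Coinduced

section DegreeOne

lemma cohomologyRes_H1π (f : H →* G) (A : Rep k G) (c : cocycles₁ A) :
    cohomologyRes f A 1 (H1π A c) = H1π _ (mapCocycles₁ f (𝟙 (Rep.res f A)) c) :=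
  H1π_comp_map_apply f (𝟙 (Rep.res f A)) c

lemma cohomologyRes_H1π_eq_zero_iff (f : H →* G) (A : Rep k G) (c : cocycles₁ A) :
    cohomologyRes f A 1 (H1π A c) = 0 ↔ ∃ v, ∀ h, c (f h) = A.ρ (f h) v - v := by
  rw [cohomologyRes_H1π, H1π_eq_zero_iff]
  constructor
  · rintro ⟨v, hv⟩
    exact ⟨v, fun h => (congrFun hv h).symm⟩
  · rintro ⟨v, hv⟩
    exact ⟨v, funext fun h => (hv h).symm⟩

/-- The affine action `g • v = ρ g v + c g` attached to a 1-cocycle `c`. -/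
def affineAction {A : Rep k G} (c : cocycles₁ A) : G →* (A →ᵃ[k] A) where
  toFun g := (A.ρ g).toAffineMap + AffineMap.const k A (c g)
  map_one' := by ext; simp
  map_mul' a b := by
    ext v
    simp [(mem_cocycles₁_iff c).1 c.2 a b, add_assoc]

lemma linearHom_comp_affineAction {A : Rep k G} (c : cocycles₁ A) :
    AffineMap.linearHom.comp (affineAction c) = A.ρ := by
  ext
  simp [affineAction]

/-- The 1-cocycle `g ↦ g • 0` of an affine action `F` with linear part `A`. -/
def affineCocycle {A : Rep k G} (F : G →* (A →ᵃ[k] A)) (hF : AffineMap.linearHom.comp F = A.ρ) :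
    cocycles₁ A :=
  ⟨fun g => F g 0, (mem_cocycles₁_iff _).2 fun a b => by
    rw [map_mul, ← hF]
    exact congrFun (F a).decomp (F b 0)⟩

variable {G₁ G₂ : Type u} [Group G₁] [Group G₂] {A : Rep k (Coprod G₁ G₂)}

lemma exists_cocycles₁_coprod (c₁ : cocycles₁ (Rep.of (A.ρ.comp (Coprod.inl : G₁ →* Coprod G₁ G₂))))
    (c₂ : cocycles₁ (Rep.of (A.ρ.comp (Coprod.inr : G₂ →* Coprod G₁ G₂)))) :
    ∃ c : cocycles₁ A, (∀ x, c (Coprod.inl x) = c₁ x) ∧ ∀ x, c (Coprod.inr x) = c₂ x := by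
  let F : Coprod G₁ G₂ →* (A →ᵃ[k] A) := Coprod.lift (affineAction c₁) (affineAction c₂)
  have hF : AffineMap.linearHom.comp F = A.ρ := by
    refine Coprod.hom_ext ?_ ?_
    · rw [MonoidHom.comp_assoc, Coprod.lift_comp_inl]
      exact linearHom_comp_affineAction c₁
    · rw [MonoidHom.comp_assoc, Coprod.lift_comp_inr]
      exact linearHom_comp_affineAction c₂
  refine ⟨affineCocycle F hF, fun x => ?_, fun x => ?_⟩ <;>
    simp [affineCocycle, F, affineAction]

lemma cocycles₁_coprod_ext {c c' : cocycles₁ A} (h₁ : ∀ x, c (Coprod.inl x) = c' (Coprod.inl x))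
    (h₂ : ∀ x, c (Coprod.inr x) = c' (Coprod.inr x)) : c = c' := by
  ext g
  induction g using Coprod.induction_on with
  | inl x => exact h₁ x
  | inr x => exact h₂ x
  | mul a b ha hb =>
    rw [(mem_cocycles₁_iff c).1 c.2, (mem_cocycles₁_iff c').1 c'.2, ha, hb]

lemma cohomologyResProd_one_surjective (A : Rep k (Coprod G₁ G₂)) :
    Function.Surjective (cohomologyResProd Coprod.inl Coprod.inr A 1) := by
  rintro ⟨x₁, x₂⟩
  induction x₁ using H1_induction_on with | h c₁ =>
  induction x₂ using H1_induction_on with | h c₂ =>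
  obtain ⟨c, hc₁, hc₂⟩ := exists_cocycles₁_coprod c₁ c₂
  refine ⟨H1π A c, Prod.ext ?_ ?_⟩
  · refine (cohomologyRes_H1π _ A c).trans (congrArg _ ?_)
    exact cocycles₁_ext hc₁
  · refine (cohomologyRes_H1π _ A c).trans (congrArg _ ?_)
    exact cocycles₁_ext hc₂

lemma codisjoint_invariants_of_injective (A : Rep k (Coprod G₁ G₂))
    (h : Function.Injective (cohomologyResProd Coprod.inl Coprod.inr A 1)) :
    Codisjoint
      (Representation.invariants (A.ρ.comp (Coprod.inl : G₁ →* Coprod G₁ G₂)))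
      (Representation.invariants (A.ρ.comp (Coprod.inr : G₂ →* Coprod G₁ G₂))) := by
  rw [Submodule.codisjoint_iff_exists_add_eq]
  intro v
  obtain ⟨c, hc₁, hc₂⟩ := exists_cocycles₁_coprod 0
    ⟨d₀₁ (Rep.of (A.ρ.comp (Coprod.inr : G₂ →* Coprod G₁ G₂))) v,
      d₀₁_apply_mem_cocycles₁ (A := Rep.of (A.ρ.comp Coprod.inr)) v⟩
  obtain ⟨w, hw⟩ := (H1π_eq_zero_iff c).1 <| (injective_iff_map_eq_zero _).1 h (H1π A c) <| Prod.ext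
    ((cohomologyRes_H1π_eq_zero_iff _ A c).2 ⟨0, fun x => by rw [hc₁, map_zero, sub_zero]; rfl⟩)
    ((cohomologyRes_H1π_eq_zero_iff _ A c).2 ⟨v, hc₂⟩)
  refine ⟨w, v - w, fun x => ?_, fun x => ?_, add_sub_cancel w v⟩
  · exact sub_eq_zero.1 ((congrFun hw (Coprod.inl x)).trans (hc₁ x))
  · have := (congrFun hw (Coprod.inr x)).trans (hc₂ x)
    rw [map_sub, sub_eq_sub_iff_sub_eq_sub]
    exact this.symm

lemma cohomologyResProd_one_injective (A : Rep k (Coprod G₁ G₂))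
    (h : Codisjoint
      (Representation.invariants (A.ρ.comp (Coprod.inl : G₁ →* Coprod G₁ G₂)))
      (Representation.invariants (A.ρ.comp (Coprod.inr : G₂ →* Coprod G₁ G₂)))) :
    Function.Injective (cohomologyResProd Coprod.inl Coprod.inr A 1) := by
  rw [injective_iff_map_eq_zero]
  intro x hx
  induction x using H1_induction_on with | h c =>
  obtain ⟨v₁, hv₁⟩ := (cohomologyRes_H1π_eq_zero_iff _ A c).1 (congrArg Prod.fst hx)
  obtain ⟨v₂, hv₂⟩ := (cohomologyRes_H1π_eq_zero_iff _ A c).1 (congrArg Prod.snd hx)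
  obtain ⟨a, b, ha, hb, hab⟩ := Submodule.codisjoint_iff_exists_add_eq.1 h (v₁ - v₂)
  have ha' (x) : A.ρ (Coprod.inl x) a = a := ha x
  have hb' (x) : A.ρ (Coprod.inr x) b = b := hb x
  have hv : v₁ - a = v₂ + b := by
    rw [sub_eq_iff_eq_add, add_assoc, add_comm b, hab, add_sub_cancel]
  let c' : cocycles₁ A := ⟨d₀₁ A (v₁ - a), d₀₁_apply_mem_cocycles₁ _⟩
  have hc' : c' = c := by
    refine cocycles₁_coprod_ext (fun x => ?_) fun x => ?_
    · change A.ρ (Coprod.inl x) (v₁ - a) - (v₁ - a) = _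
      rw [hv₁, map_sub, ha', sub_sub_sub_cancel_right]
    · change A.ρ (Coprod.inr x) (v₁ - a) - (v₁ - a) = _
      rw [hv, hv₂, map_add, hb', add_sub_add_right_eq_sub]
  exact (H1π_eq_zero_iff c).2 ⟨v₁ - a, congrArg Subtype.val hc'⟩

lemma codisjoint_invariants_of_epi {A B : Rep.{u} k G} (f₁ : G₁ →* G) (f₂ : G₂ →* G) (π : A ⟶ B)
    [Epi π]
    (h : Codisjoint (Representation.invariants (A.ρ.comp f₁))
      (Representation.invariants (A.ρ.comp f₂))) :
    Codisjoint (Representation.invariants (B.ρ.comp f₁))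
      (Representation.invariants (B.ρ.comp f₂)) := by
  rw [Submodule.codisjoint_iff_exists_add_eq] at h ⊢
  intro w
  obtain ⟨v, rfl⟩ := (Rep.epi_iff_surjective π).1 inferInstance w
  obtain ⟨a, b, ha, hb, rfl⟩ := h v
  refine ⟨π a, π b, fun x => ?_, fun x => ?_, (map_add π.hom a b).symm⟩
  · exact (Rep.hom_comm_apply π (f₁ x) a).symm.trans (congrArg π (ha x))
  · exact (Rep.hom_comm_apply π (f₂ x) b).symm.trans (congrArg π (hb x))

end DegreeOne

lemma shortExact_toCoindFun (A : Rep.{u} k G) :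
    (ShortComplex.mk (toCoindFun A) (cokernel.π _) (cokernel.condition _)).ShortExact where
  exact := ShortComplex.exact_cokernel _
  mono_f := mono_toCoindFun A
  epi_g := inferInstanceAs (Epi (cokernel.π _))

section Coprod

variable {G₁ G₂ : Type u} [Group G₁] [Group G₂] {V : Type u} [AddCommGroup V] [Module k V]

lemma isZero_groupCohomology_coindFun (n : ℕ) :
    IsZero (groupCohomology (Rep.of (coindFun k G V)) (n + 1)) :=
  isZero_groupCohomology_coindFun_comp (MonoidHom.id G) id (fun _ _ => rfl) n

lemma isZero_groupCohomology_coindFun_inl (n : ℕ) :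
    IsZero (groupCohomology (Rep.of ((coindFun k (Coprod G₁ G₂) V).comp Coprod.inl)) (n + 1)) :=
  isZero_groupCohomology_coindFun_comp (Coprod.inl : G₁ →* Coprod G₁ G₂) Coprod.fst (by simp) n

lemma isZero_groupCohomology_coindFun_inr (n : ℕ) :
    IsZero (groupCohomology (Rep.of ((coindFun k (Coprod G₁ G₂) V).comp Coprod.inr)) (n + 1)) :=
  isZero_groupCohomology_coindFun_comp (Coprod.inr : G₂ →* Coprod G₁ G₂) Coprod.snd (by simp) n

lemma cohomologyResProd_one_bijective_of_epi {A : Rep k (Coprod G₁ G₂)}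
    (π : Rep.of (coindFun k (Coprod G₁ G₂) V) ⟶ A) [Epi π] :
    Function.Bijective (cohomologyResProd Coprod.inl Coprod.inr A 1) := by
  have := ModuleCat.subsingleton_of_isZero
    (isZero_groupCohomology_coindFun (k := k) (G := Coprod G₁ G₂) (V := V) 0)
  refine ⟨cohomologyResProd_one_injective A ?_, cohomologyResProd_one_surjective A⟩
  exact codisjoint_invariants_of_epi _ _ π <|
    codisjoint_invariants_of_injective _ <| Function.injective_of_subsingleton _

lemma cohomologyResProd_bijective (M : Rep k (Coprod G₁ G₂)) (n : ℕ) :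
    Function.Bijective (cohomologyResProd Coprod.inl Coprod.inr M (n + 2)) := by
  induction n generalizing M <;>
    refine cohomologyResProd_bijective_succ _ _ (shortExact_toCoindFun M)
      isZero_groupCohomology_coindFun isZero_groupCohomology_coindFun_inl
      isZero_groupCohomology_coindFun_inr ?_
  case zero => exact cohomologyResProd_one_bijective_of_epi (cokernel.π _)
  case succ ih => exact ih _

end Coprod

end FreeProductCohomology

/-- Mayer–Vietoris for a free product `G = G₁ * G₂`: for every representation `M` of `G`
over a commutative ring `k`, the map `Hⁿ(G, M) → Hⁿ(G₁, M) × Hⁿ(G₂, M)` whose components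
are the restriction maps along the canonical inclusions is bijective for every `n ≥ 2`,
and for `n = 1` it is surjective. -/
theorem free_product_cohomology_restriction_bijective
    (k G₁ G₂ : Type u) [CommRing k] [Group G₁] [Group G₂]
    (M : Rep k (Monoid.Coprod G₁ G₂)) :
    (∀ n : ℕ, 2 ≤ n →
      Function.Bijective (fun x : groupCohomology M n =>
        (cohomologyRes Monoid.Coprod.inl M n x, cohomologyRes Monoid.Coprod.inr M n x))) ∧
    Function.Surjective (fun x : groupCohomology M 1 =>
      (cohomologyRes Monoid.Coprod.inl M 1 x, cohomologyRes Monoid.Coprod.inr M 1 x)) := by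
  refine ⟨fun n hn => ?_, FreeProductCohomology.cohomologyResProd_one_surjective M⟩
  obtain ⟨n, rfl⟩ := Nat.exists_eq_add_of_le' hn
  exact FreeProductCohomology.cohomologyResProd_bijective M n
end

section
/- Let k be a commutative ring, G a finite group whose order (as an element of k) is invertible in k, and M a representation of G over k. Then Hⁱ(G, M) = 0 for all i ≥ 1, i.e. the group cohomology of G with coefficients in M is trivial in all positive degrees. -/
/-!
Taking `G`-invariants is exact once `|G|` is invertible in `k`: averaging over `G` a preimage of an
invariant vector gives an invariant preimage. Invariants are right adjoint to equipping a module
with the trivial action, so trivial representations on projective modules are projective; in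
particular `k` is, and `Hⁱ(G, M) ≅ Extⁱ(k, M)` vanishes for `i ≥ 1`.
-/

open CategoryTheory

universe u

section Invariants

open Representation

variable {k G V W : Type*} [CommRing k] [Group G] [AddCommGroup V] [Module k V]
  [AddCommGroup W] [Module k W] {ρ : Representation k G V} {σ : Representation k G W}

lemma intertwiningMap_apply_averageMap [Fintype G] [Invertible (Fintype.card G : k)]
    (f : IntertwiningMap ρ σ) (v : V) : f (averageMap ρ v) = averageMap σ (f v) := by
  simp [GroupAlgebra.average, f.isIntertwining]

lemma exists_mem_invariants_apply_eq [Finite G] (hG : IsUnit (Nat.card G : k))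
    {f : IntertwiningMap ρ σ} (hf : Function.Surjective f) {w : W} (hw : w ∈ σ.invariants) :
    ∃ v ∈ ρ.invariants, f v = w := by
  have := Fintype.ofFinite G
  rw [Nat.card_eq_fintype_card] at hG
  have := hG.invertible
  obtain ⟨v, rfl⟩ := hf w
  refine ⟨averageMap ρ v, averageMap_invariant ρ v, ?_⟩
  rw [intertwiningMap_apply_averageMap, averageMap_id σ (f v) hw]

end Invariants

section Projective

variable {k G : Type*} [CommRing k] [Group G] [Finite G]

lemma preservesEpimorphisms_invariantsFunctor_of_isUnit_card (hG : IsUnit (Nat.card G : k)) :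
    (Rep.invariantsFunctor k G).PreservesEpimorphisms where
  preserves {A B} f hf := by
    rw [Rep.epi_iff_surjective] at hf
    refine (ModuleCat.epi_iff_surjective _).2 fun ⟨w, hw⟩ ↦ ?_
    obtain ⟨v, hv, hfv⟩ := exists_mem_invariants_apply_eq hG hf hw
    exact ⟨⟨v, hv⟩, Subtype.ext hfv⟩

lemma projective_trivial_of_isUnit_card (hG : IsUnit (Nat.card G : k)) (P : Type*)
    [AddCommGroup P] [Module k P] [Module.Projective k P] : Projective (Rep.trivial k G P) :=
  have := preservesEpimorphisms_invariantsFunctor_of_isUnit_card hG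
  (Rep.invariantsAdjunction k G).map_projective (ModuleCat.of k P) inferInstance

end Projective

/-- If `G` is a finite group whose order is invertible in the commutative ring `k`, then the
group cohomology `Hⁱ(G, M)` of any representation `M` of `G` over `k` vanishes for all
`i ≥ 1`. -/
theorem groupCohomology_isZero_of_isUnit_card
    (k G : Type u) [CommRing k] [Group G] [Finite G]
    (h : IsUnit ((Nat.card G : k))) (M : Rep k G) :
    ∀ i : ℕ, 1 ≤ i → Limits.IsZero (groupCohomology M i) := by
  intro i hi
  obtain ⟨n, rfl⟩ := Nat.exists_eq_add_of_le' hi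
  have : Projective (Rep.trivial k G k) := projective_trivial_of_isUnit_card h k
  exact (isZero_Ext_succ_of_projective (Rep.trivial k G k) M n).of_iso (groupCohomologyIsoExt M _)
end

section
/- Let K be a field which is either of characteristic 0 or finite. Let A be a nontrivial finite-dimensional commutative K-algebra admitting a K-basis a₁, …, a_n such that, for every i, the minimal polynomial of a_i over K equals p_i^{e_i} for some irreducible polynomial p_i ∈ K[X] and some positive integer e_i. Then A is a local ring. -/
/-!
Let `Ω` be an algebraically closed field containing `K`, and let `L` and `M` be the residue fields
at two distinct maximal ideals of `A`. If the minimal polynomial of `a` is a power of an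
irreducible polynomial `p`, then the images of `a` in `L` and in `M` both have minimal polynomial
`p` up to a unit. As `σ` runs through the embeddings `L → Ω`, the value of `σ` at the image of `a`
runs through the roots of `p`, each taken equally often, and likewise for `M`. So the sum of all
embeddings of `L` and the sum of all embeddings of `M` are proportional at every such `a`, the
ratio being that of the separable degrees, in lowest terms `c` and `d`. If such `a` span `A`, this
is a linear relation between distinct homomorphisms `A → Ω`, and Dedekind's theorem makes the
coprime integers `c` and `d` both vanish in `Ω`.

Sums over embeddings replace traces, which vanish identically on inseparable extensions, and
working in lowest terms keeps one of the coefficients nonzero in positive characteristic.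
-/

open Field IntermediateField

section SumOfEmbeddings

variable {K : Type*} [Field K] (Ω : Type*) [Field Ω] [Algebra K Ω] [IsAlgClosed Ω]

theorem sum_algHom_algebraMap {E L : Type*} [Field E] [Field L] [Algebra K E] [Algebra K L]
    [Algebra E L] [IsScalarTower K E L] [FiniteDimensional K E] [FiniteDimensional K L] (x : E) :
    ∑ σ : L →ₐ[K] Ω, σ (algebraMap E L x) = finSepDegree E L • ∑ τ : E →ₐ[K] Ω, τ x := by
  have : FiniteDimensional E L := .right K E L
  let (τ : E →ₐ[K] Ω) : Fintype (@AlgHom E L Ω _ _ _ _ τ.toRingHom.toAlgebra) :=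
    let := τ.toRingHom.toAlgebra
    inferInstance
  have card_extensions (τ : E →ₐ[K] Ω) :
      Fintype.card (@AlgHom E L Ω _ _ _ _ τ.toRingHom.toAlgebra) = finSepDegree E L := by
    let := τ.toRingHom.toAlgebra
    rw [finSepDegree_eq_of_isAlgClosed E L Ω, Nat.card_eq_fintype_card]
  calc ∑ σ : L →ₐ[K] Ω, σ (algebraMap E L x)
      = ∑ σ : Σ τ : E →ₐ[K] Ω, @AlgHom E L Ω _ _ _ _ τ.toRingHom.toAlgebra, σ.1 x :=
        Fintype.sum_equiv algHomEquivSigma _ _ fun _ ↦ rfl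
    _ = ∑ τ : E →ₐ[K] Ω, finSepDegree E L • τ x := by
        simp only [Fintype.sum_sigma, Finset.sum_const, Finset.card_univ, card_extensions]
    _ = finSepDegree E L • ∑ τ : E →ₐ[K] Ω, τ x := Finset.sum_nsmul _ _ _

theorem nsmul_sum_algHom_eq_of_minpoly_eq {L M : Type*} [Field L] [Field M] [Algebra K L]
    [Algebra K M] [FiniteDimensional K L] [FiniteDimensional K M] {x : L} {y : M}
    (hxy : minpoly K x = minpoly K y) {c d : ℕ}
    (hcd : c * finSepDegree K L = d * finSepDegree K M) :
    c • ∑ σ : L →ₐ[K] Ω, σ x = d • ∑ τ : M →ₐ[K] Ω, τ y := by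
  have hx : IsIntegral K x := .of_finite K x
  have hy : IsIntegral K y := .of_finite K y
  let e : K⟮x⟯ ≃ₐ[K] K⟮y⟯ := (adjoin.powerBasis hx).equivOfMinpoly (adjoin.powerBasis hy) <| by
    rw [adjoin.powerBasis_gen, adjoin.powerBasis_gen, minpoly_gen, minpoly_gen, hxy]
  have he : e (AdjoinSimple.gen K x) = AdjoinSimple.gen K y := by
    simpa only [adjoin.powerBasis_gen] using
      (adjoin.powerBasis hx).equivOfMinpoly_gen (adjoin.powerBasis hy) _
  have sum_gen : ∑ σ : K⟮x⟯ →ₐ[K] Ω, σ (AdjoinSimple.gen K x) =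
      ∑ τ : K⟮y⟯ →ₐ[K] Ω, τ (AdjoinSimple.gen K y) :=
    (Fintype.sum_equiv (e.arrowCongr .refl).symm _ _ fun τ ↦ by
      simp [AlgEquiv.arrowCongr, he]).symm
  have degrees : c * finSepDegree K⟮x⟯ L = d * finSepDegree K⟮y⟯ M := by
    refine Nat.eq_of_mul_eq_mul_left (NeZero.pos (finSepDegree K K⟮x⟯)) ?_
    rw [mul_left_comm, finSepDegree_mul_finSepDegree_of_isAlgebraic, hcd,
      finSepDegree_eq_of_equiv K _ _ e, mul_left_comm,
      finSepDegree_mul_finSepDegree_of_isAlgebraic]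
  calc c • ∑ σ : L →ₐ[K] Ω, σ x
      = (c * finSepDegree K⟮x⟯ L) • ∑ σ : K⟮x⟯ →ₐ[K] Ω, σ (AdjoinSimple.gen K x) := by
        rw [mul_smul, ← sum_algHom_algebraMap, AdjoinSimple.algebraMap_gen]
    _ = (d * finSepDegree K⟮y⟯ M) • ∑ τ : K⟮y⟯ →ₐ[K] Ω, τ (AdjoinSimple.gen K y) := by
        rw [degrees, sum_gen]
    _ = d • ∑ τ : M →ₐ[K] Ω, τ y := by
        rw [mul_smul, ← sum_algHom_algebraMap, AdjoinSimple.algebraMap_gen]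

end SumOfEmbeddings

theorem linearIndependent_sumElim_algHom_comp {K A L M : Type*} (Ω : Type*) [CommRing K] [Ring A]
    [DivisionRing L] [DivisionRing M] [CommRing Ω] [IsDomain Ω] [Algebra K A] [Algebra K L]
    [Algebra K M] [Algebra K Ω] {f : A →ₐ[K] L} {g : A →ₐ[K] M} (hf : Function.Surjective f)
    (hg : Function.Surjective g) (hfg : RingHom.ker f ≠ RingHom.ker g) :
    LinearIndependent Ω (Sum.elim (fun σ : L →ₐ[K] Ω ↦ (σ.comp f).toLinearMap)
      fun τ : M →ₐ[K] Ω ↦ (τ.comp g).toLinearMap) := by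
  have comp_ne (σ : L →ₐ[K] Ω) (τ : M →ₐ[K] Ω) : σ.comp f ≠ τ.comp g := by
    refine fun hστ ↦ hfg ?_
    ext a
    have : σ (f a) = τ (g a) := DFunLike.congr_fun hστ a
    rw [RingHom.mem_ker, RingHom.mem_ker, ← map_eq_zero σ, this, map_eq_zero]
  have injective : Function.Injective
      (Sum.elim (fun σ : L →ₐ[K] Ω ↦ σ.comp f) fun τ : M →ₐ[K] Ω ↦ τ.comp g) :=
    Function.Injective.sumElim (fun _ _ ↦ (AlgHom.cancel_right hf).1)
      (fun _ _ ↦ (AlgHom.cancel_right hg).1) comp_ne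
  convert (linearIndependent_algHom_toLinearMap K A Ω).comp _ injective using 1
  exact (Sum.comp_elim AlgHom.toLinearMap _ _).symm

theorem ker_eq_ker_of_span_eq_top_of_minpoly_eq {K A L M : Type*} [Field K] [Ring A] [Field L]
    [Field M] [Algebra K A] [Algebra K L] [Algebra K M] [FiniteDimensional K L]
    [FiniteDimensional K M] {f : A →ₐ[K] L} {g : A →ₐ[K] M} (hf : Function.Surjective f)
    (hg : Function.Surjective g) {S : Set A} (hS : Submodule.span K S = ⊤)
    (h : ∀ a ∈ S, minpoly K (f a) = minpoly K (g a)) : RingHom.ker f = RingHom.ker g := by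
  by_contra hfg
  let Ω := AlgebraicClosure K
  obtain ⟨d, c, coprime, hd, hc⟩ := Nat.exists_coprime (finSepDegree K L) (finSepDegree K M)
  have hcd : c * finSepDegree K L = d * finSepDegree K M := by
    generalize (finSepDegree K L).gcd (finSepDegree K M) = m at hd hc
    rw [hd, hc, mul_left_comm]
  have proportional : (c : Ω) • ∑ σ : L →ₐ[K] Ω, (σ.comp f).toLinearMap =
      (d : Ω) • ∑ τ : M →ₐ[K] Ω, (τ.comp g).toLinearMap :=
    LinearMap.ext_on hS fun a ha ↦ by
      simpa using nsmul_sum_algHom_eq_of_minpoly_eq Ω (h a ha) hcd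
  have coeff_eq_zero := Fintype.linearIndependent_iff.1
    (linearIndependent_sumElim_algHom_comp Ω hf hg hfg) (Sum.elim (fun _ ↦ c) fun _ ↦ -d) <| by
      simp only [Fintype.sum_sum_type, Sum.elim_inl, Sum.elim_inr, ← Finset.smul_sum, proportional,
        neg_smul, Finset.sum_neg_distrib, add_neg_cancel]
  have hc_zero : (c : Ω) = 0 := coeff_eq_zero (.inl IsAlgClosed.lift)
  have hd_zero : (d : Ω) = 0 := neg_eq_zero.1 (coeff_eq_zero (.inr IsAlgClosed.lift))
  exact not_isCoprime_zero_zero (hc_zero ▸ hd_zero ▸ coprime.cast (R := Ω))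

open Polynomial in
theorem minpoly_algHom_eq_of_minpoly_eq_pow {K A L : Type*} [Field K] [Ring A] [Ring L]
    [Nontrivial L] [IsReduced L] [Algebra K A] [Algebra K L] (f : A →ₐ[K] L) {a : A} {p : K[X]}
    {e : ℕ} (hp : Irreducible p) (ha : minpoly K a = p ^ e) :
    minpoly K (f a) = p * C p.leadingCoeff⁻¹ := by
  have aeval_pow : aeval (f a) p ^ e = 0 := by
    rw [← map_pow, ← ha, aeval_algHom_apply, minpoly.aeval, map_zero]
  exact (minpoly.eq_of_irreducible hp (eq_zero_of_pow_eq_zero aeval_pow)).symm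

theorem minpoly_algHom_eq_of_isPrimePow {K A L M : Type*} [Field K] [Ring A] [Ring L] [Ring M]
    [Nontrivial L] [Nontrivial M] [IsReduced L] [IsReduced M] [Algebra K A] [Algebra K L]
    [Algebra K M] (f : A →ₐ[K] L) (g : A →ₐ[K] M) {a : A} (ha : IsPrimePow (minpoly K a)) :
    minpoly K (f a) = minpoly K (g a) := by
  obtain ⟨p, e, hp, -, hpe⟩ := ha
  rw [minpoly_algHom_eq_of_minpoly_eq_pow f hp.irreducible hpe.symm,
    minpoly_algHom_eq_of_minpoly_eq_pow g hp.irreducible hpe.symm]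

theorem isLocalRing_of_basis_minpoly_primePow_general {K A : Type*} [Field K] [CommRing A]
    [Algebra K A] [Nontrivial A] [FiniteDimensional K A] {S : Set A}
    (hS : Submodule.span K S = ⊤) (h : ∀ a ∈ S, IsPrimePow (minpoly K a)) : IsLocalRing A := by
  obtain ⟨I, hI⟩ := Ideal.exists_maximal A
  refine .of_unique_max_ideal ⟨I, hI, fun J (hJ : J.IsMaximal) ↦ ?_⟩
  let := Ideal.Quotient.field I
  let := Ideal.Quotient.field J
  have ker_eq : RingHom.ker (Ideal.Quotient.mkₐ K J) = RingHom.ker (Ideal.Quotient.mkₐ K I) :=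
    ker_eq_ker_of_span_eq_top_of_minpoly_eq (Ideal.Quotient.mkₐ_surjective K J)
      (Ideal.Quotient.mkₐ_surjective K I) hS fun a ha ↦
        minpoly_algHom_eq_of_isPrimePow _ _ (h a ha)
  exact (Ideal.Quotient.mkₐ_ker K J).symm.trans (ker_eq.trans (Ideal.Quotient.mkₐ_ker K I))

/-- Let `K` be a field of characteristic `0` or a finite field, and let `A` be a nontrivial
finite-dimensional commutative `K`-algebra admitting a `K`-basis each of whose elements has a
minimal polynomial over `K` that is a power of an irreducible polynomial. Then `A` is local. -/
theorem isLocalRing_of_basis_minpoly_primePow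
    (K A : Type*) [Field K] [CommRing A] [Algebra K A] [Nontrivial A] [FiniteDimensional K A]
    (hK : CharZero K ∨ Finite K) {n : ℕ} (b : Module.Basis (Fin n) K A)
    (h : ∀ i : Fin n, ∃ (p : Polynomial K) (e : ℕ),
      Irreducible p ∧ 0 < e ∧ minpoly K (b i) = p ^ e) :
    IsLocalRing A :=
  isLocalRing_of_basis_minpoly_primePow_general b.span_eq <| Set.forall_mem_range.2 fun i ↦
    let ⟨p, e, hp, he, hpe⟩ := h i
    ⟨p, e, hp.prime, he, hpe.symm⟩
end

section
/- Let K be a field and A a nontrivial finite-dimensional commutative K-algebra. Then A is a local ring if and only if for every a ∈ A the minimal polynomial of a over K is a prime power, i.e. equals p^e for some irreducible polynomial p ∈ K[X] and some positive integer e. -/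
/-!
An element `f(a)` of an integral `K`-algebra is a unit if and only if `f` is coprime to the minimal
polynomial `m` of `a`. If `A` is local and `m = g * h` with `g` and `h` coprime, then
`u * g + v * h = 1` forces `g(a)` or `h(a)` to be a unit, so `g` or `h` is constant; hence `m` has
only one irreducible factor. Conversely, if `m = p ^ e`, then `p` cannot divide both `X` and
`1 - X`, so one of them is coprime to `m` and `a` or `1 - a` is a unit.
-/

open Polynomial

section PrimePow

theorem exists_prime_pow_associated {R : Type*} [CommRing R] [IsDomain R] [IsPrincipalIdealRing R]
    {n : R} (hn₀ : n ≠ 0) (hn : ¬IsUnit n)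
    (hcoprime : ∀ x y : R, IsCoprime x y → x * y = n → IsUnit x ∨ IsUnit y) :
    ∃ (p : R) (k : ℕ), Prime p ∧ 0 < k ∧ Associated (p ^ k) n := by
  obtain ⟨p, hp, hpn⟩ := WfDvdMonoid.exists_irreducible_factor hn hn₀
  obtain ⟨k, c, hpc, hnc⟩ := WfDvdMonoid.max_power_factor hn₀ hp
  have hk : k ≠ 0 := by
    rintro rfl
    exact hpc (by simpa [hnc] using hpn)
  have hc : IsUnit c :=
    (hcoprime (p ^ k) c (hp.coprime_iff_not_dvd.mpr hpc).pow_left hnc.symm).resolve_left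
      fun h => hp.not_isUnit ((isUnit_pow_iff hk).mp h)
  exact ⟨p, k, hp.prime, Nat.pos_of_ne_zero hk, hc.unit, hnc.symm⟩

theorem isPrimePow_of_associated_of_normalize_eq_self {M : Type*} [CommMonoidWithZero M]
    [StrongNormalizationMonoid M] {n p : M} {k : ℕ} (hn : normalize n = n)
    (hp : Prime p) (hk : 0 < k) (hpn : Associated (p ^ k) n) : IsPrimePow n := by
  refine ⟨normalize p, k, (normalize_associated p).symm.prime hp, hk, ?_⟩
  calc
    normalize p ^ k = normalize (p ^ k) := (map_pow normalizeHom p k).symm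
    _ = normalize n := normalize_eq_normalize_iff_associated.mpr hpn
    _ = n := hn

end PrimePow

section Minpoly

theorem isUnit_aeval_of_isCoprime_minpoly {R B : Type*} [CommRing R] [Ring B] [Algebra R B] {b : B}
    {f : R[X]} (h : IsCoprime f (minpoly R b)) : IsUnit (aeval b f) := by
  obtain ⟨u, v, huv⟩ := h
  have hu : aeval b (u * f) = 1 := by
    simpa using congrArg (aeval b) huv
  refine isUnit_iff_exists.mpr ⟨aeval b u, ?_, ?_⟩
  · rw [← map_mul, mul_comm, hu]
  · rw [← map_mul, hu]

variable {K A : Type*} [Field K] [Ring A] [Algebra K A] {a : A}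

theorem isCoprime_minpoly_of_isUnit_aeval {f : K[X]} (ha : IsIntegral K a)
    (hf : IsUnit (aeval a f)) : IsCoprime f (minpoly K a) := by
  refine isCoprime_of_irreducible_dvd (fun h => minpoly.ne_zero ha h.2) ?_
  rintro q hq ⟨s, hs⟩ ⟨r, hr⟩
  have hfr : aeval a f * aeval a r = 0 := by
    rw [← map_mul, hs, mul_right_comm, ← hr, map_mul, minpoly.aeval, zero_mul]
  have hdvd : q * r ∣ r := hr ▸ minpoly.dvd K a (hf.mul_right_eq_zero.mp hfr)
  have hr₀ : r ≠ 0 := right_ne_zero_of_mul (hr ▸ minpoly.ne_zero ha)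
  exact hq.not_isUnit (isUnit_of_dvd_one ((mul_dvd_mul_iff_right hr₀).mp (by rwa [one_mul])))

theorem isUnit_or_isUnit_of_mul_eq_minpoly [IsLocalRing A] (ha : IsIntegral K a) {g h : K[X]}
    (hgh : IsCoprime g h) (hmul : g * h = minpoly K a) : IsUnit g ∨ IsUnit h := by
  obtain ⟨u, v, huv⟩ := hgh
  have hadd : aeval a (u * g) + aeval a (v * h) = 1 := by rw [← map_add, huv, map_one]
  refine (IsLocalRing.isUnit_or_isUnit_of_add_one hadd).imp (fun hg => ?_) (fun hh => ?_)
  · exact (isCoprime_minpoly_of_isUnit_aeval ha hg).isUnit_of_dvd' (dvd_mul_left g u)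
      (Dvd.intro h hmul)
  · exact (isCoprime_minpoly_of_isUnit_aeval ha hh).isUnit_of_dvd' (dvd_mul_left h v)
      (Dvd.intro_left g hmul)

theorem isPrimePow_minpoly [IsLocalRing A] (ha : IsIntegral K a) : IsPrimePow (minpoly K a) := by
  classical
  obtain ⟨p, k, hp, hk, hpk⟩ := exists_prime_pow_associated (minpoly.ne_zero ha)
    (minpoly.not_isUnit K a) fun _ _ => isUnit_or_isUnit_of_mul_eq_minpoly ha
  exact isPrimePow_of_associated_of_normalize_eq_self (minpoly.monic ha).normalize_eq_self hp hk hpk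

theorem isUnit_or_isUnit_one_sub_of_isPrimePow_minpoly (h : IsPrimePow (minpoly K a)) :
    IsUnit a ∨ IsUnit (1 - a) := by
  obtain ⟨p, e, hp, -, hpe⟩ := h
  have isUnit_of_not_dvd {f : K[X]} (hf : ¬p ∣ f) : IsUnit (aeval a f) :=
    isUnit_aeval_of_isCoprime_minpoly (hpe ▸ (hp.coprime_iff_not_dvd.mpr hf).symm.pow_right)
  by_cases hX : p ∣ X
  · have h_one_sub : ¬p ∣ 1 - X := fun hdvd => hp.not_dvd_one ((dvd_sub_left hX).mp hdvd)
    right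
    simpa using isUnit_of_not_dvd h_one_sub
  · left
    simpa using isUnit_of_not_dvd hX

theorem isLocalRing_of_isPrimePow_minpoly (h : ∀ a : A, IsPrimePow (minpoly K a)) :
    IsLocalRing A := by
  have : Nontrivial A := not_subsingleton_iff_nontrivial.mp fun _ =>
    (h 0).ne_one (minpoly.subsingleton K 0)
  exact .of_isUnit_or_isUnit_one_sub_self fun a =>
    isUnit_or_isUnit_one_sub_of_isPrimePow_minpoly (h a)

end Minpoly

theorem isLocalRing_iff_minpoly_primePow_general
    (K A : Type*) [Field K] [Ring A] [Algebra K A] [Algebra.IsIntegral K A] :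
    IsLocalRing A ↔ ∀ a : A, ∃ (p : K[X]) (e : ℕ),
      Irreducible p ∧ 0 < e ∧ minpoly K a = p ^ e := by
  simp only [irreducible_iff_prime, eq_comm (a := minpoly K _), ← isPrimePow_def]
  exact ⟨fun _ a => isPrimePow_minpoly (Algebra.IsIntegral.isIntegral a),
    isLocalRing_of_isPrimePow_minpoly⟩

/-- A nontrivial finite-dimensional commutative algebra `A` over a field `K` is local if and
only if the minimal polynomial over `K` of every element of `A` is a prime power, i.e. a power
`p^e` of an irreducible polynomial `p ∈ K[X]` with `e ≥ 1`. -/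
theorem isLocalRing_iff_minpoly_primePow
    (K A : Type*) [Field K] [CommRing A] [Algebra K A] [Nontrivial A] [FiniteDimensional K A] :
    IsLocalRing A ↔ ∀ a : A, ∃ (p : Polynomial K) (e : ℕ),
      Irreducible p ∧ 0 < e ∧ minpoly K a = p ^ e :=
  isLocalRing_iff_minpoly_primePow_general K A
end

section
/- Let K be a perfect field and A a finite-dimensional commutative local K-algebra. Suppose a₁, …, a_n generate A as a K-algebra (the K-subalgebra generated by {a₁,…,a_n} is all of A) and that, for every i, the minimal polynomial of a_i over K is irreducible. Then A is a field. -/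
/-!
Differentiating a separable relation `p x = 0` gives `p' x • D x = 0` with `p' x` a unit, so every
derivation kills separable elements and an algebra generated by such elements is unramified. Over
a field, an unramified algebra of finite type is reduced. A reduced ring that is local and integral
over a field is a field, its maximal ideal being its only prime ideal and hence its nilradical.
Over a perfect field irreducible polynomials are separable.
-/

open Algebra Polynomial

theorem exists_finset_subset_mem_adjoin {R A : Type*} [CommSemiring R] [Semiring A] [Algebra R A]
    {s : Set A} {x : A} (hx : x ∈ adjoin R s) :
    ∃ t : Finset A, ↑t ⊆ s ∧ x ∈ adjoin R (t : Set A) := by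
  classical
  induction hx using adjoin_induction with
  | mem x hx => exact ⟨{x}, by simpa, subset_adjoin (by simp)⟩
  | algebraMap r => exact ⟨∅, by simp, algebraMap_mem _ r⟩
  | add x y _ _ ihx ihy =>
    obtain ⟨t, hts, hxt⟩ := ihx
    obtain ⟨u, hus, hyu⟩ := ihy
    exact ⟨t ∪ u, by simp [hts, hus],
      add_mem (adjoin_mono (by simp) hxt) (adjoin_mono (by simp) hyu)⟩
  | mul x y _ _ ihx ihy =>
    obtain ⟨t, hts, hxt⟩ := ihx
    obtain ⟨u, hus, hyu⟩ := ihy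
    exact ⟨t ∪ u, by simp [hts, hus],
      mul_mem (adjoin_mono (by simp) hxt) (adjoin_mono (by simp) hyu)⟩

section CommRing

variable {R A : Type*} [CommRing R] [CommRing A] [Algebra R A]

theorem isUnit_aeval_derivative_of_separable {p : R[X]} (hp : p.Separable) {x : A}
    (hx : aeval x p = 0) : IsUnit (aeval x (derivative p)) := by
  have h_coprime : IsCoprime (aeval x p) (aeval x (derivative p)) :=
    IsCoprime.map hp (aeval x).toRingHom
  rwa [hx, isCoprime_zero_left] at h_coprime

theorem derivation_apply_eq_zero_of_separable {M : Type*} [AddCommGroup M] [Module R M]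
    [Module A M] (D : Derivation R A M) {p : R[X]} (hp : p.Separable) {x : A}
    (hx : aeval x p = 0) : D x = 0 := by
  have h_deriv : aeval x (derivative p) • D x = 0 := by rw [← D.map_aeval, hx, D.map_zero]
  exact (isUnit_aeval_derivative_of_separable hp hx).smul_eq_zero.mp h_deriv

theorem formallyUnramified_of_adjoin_eq_top_of_isSeparable {s : Set A} (hs : adjoin R s = ⊤)
    (hsep : ∀ x ∈ s, IsSeparable R x) : FormallyUnramified R A := by
  have hD : KaehlerDifferential.D R A = 0 :=
    Derivation.ext_of_adjoin_eq_top s hs fun x hx ↦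
      derivation_apply_eq_zero_of_separable _ (hsep x hx) (minpoly.aeval R x)
  have h_id : (LinearMap.id : Ω[A⁄R] →ₗ[A] Ω[A⁄R]) = 0 :=
    Derivation.liftKaehlerDifferential_unique _ _ (by simp [hD])
  exact ⟨subsingleton_of_forall_eq 0 (LinearMap.congr_fun h_id)⟩

theorem formallyUnramified_adjoin_of_isSeparable {s : Set A} (hsep : ∀ x ∈ s, IsSeparable R x) :
    FormallyUnramified R (adjoin R s) :=
  formallyUnramified_of_adjoin_eq_top_of_isSeparable adjoin_adjoin_coe_preimage fun x hx ↦
    (isSeparable_map_iff (adjoin R s).val Subtype.val_injective).mp (hsep x hx)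

theorem isIntegral_of_adjoin_eq_top {s : Set A} (hs : adjoin R s = ⊤)
    (hint : ∀ x ∈ s, IsIntegral R x) : Algebra.IsIntegral R A :=
  integralClosure_eq_top_iff.mp <| top_le_iff.mp <| hs ▸ adjoin_le hint

variable (R) in
theorem krullDimLE_zero_of_isIntegral [Ring.KrullDimLE 0 R] [Algebra.IsIntegral R A] :
    Ring.KrullDimLE 0 A :=
  .mk₀ fun I _ ↦ Ideal.isMaximal_of_isIntegral_of_isMaximal_comap (R := R) I inferInstance

end CommRing

section Field

variable {K A : Type*} [Field K] [CommRing A] [Algebra K A]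

-- An unramified algebra that is not of finite type need not be reduced, so a nilpotent element is
-- first placed in a subalgebra generated by finitely many of the separable generators.
theorem isReduced_of_adjoin_eq_top_of_isSeparable {s : Set A} (hs : adjoin K s = ⊤)
    (hsep : ∀ x ∈ s, IsSeparable K x) : IsReduced A where
  eq_zero x hx := by
    obtain ⟨t, hts, hxt⟩ := exists_finset_subset_mem_adjoin (hs ▸ mem_top : x ∈ adjoin K s)
    let B := adjoin K (t : Set A)
    have : FormallyUnramified K B :=
      formallyUnramified_adjoin_of_isSeparable fun y hy ↦ hsep y (hts hy)
    have : FiniteType K B := .adjoin_of_finite t.finite_toSet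
    have : IsReduced B := FormallyUnramified.isReduced_of_field K B
    have h_nilpotent : IsNilpotent (⟨x, hxt⟩ : B) :=
      (IsNilpotent.map_iff (f := B.val) Subtype.val_injective).mp hx
    exact congrArg B.val h_nilpotent.eq_zero

theorem isField_of_local_irreducible_minpoly_generators_general [IsLocalRing A] {s : Set A}
    (hs : adjoin K s = ⊤) (hsep : ∀ x ∈ s, IsSeparable K x) : IsField A := by
  have : IsReduced A := isReduced_of_adjoin_eq_top_of_isSeparable hs hsep
  have : Algebra.IsIntegral K A := isIntegral_of_adjoin_eq_top hs fun x hx ↦ (hsep x hx).isIntegral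
  have : Ring.KrullDimLE 0 A := krullDimLE_zero_of_isIntegral K
  exact Ring.KrullDimLE.isField_of_isReduced

end Field

/-- Let `K` be a perfect field and `A` a finite-dimensional commutative local `K`-algebra.
If `A` is generated as a `K`-algebra by elements `a₁, …, aₙ` whose minimal polynomials over
`K` are irreducible, then `A` is a field. -/
theorem isField_of_local_irreducible_minpoly_generators
    (K A : Type*) [Field K] [PerfectField K] [CommRing A] [Algebra K A]
    [FiniteDimensional K A] [IsLocalRing A]
    {n : ℕ} (a : Fin n → A) (hgen : Algebra.adjoin K (Set.range a) = ⊤)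
    (hirr : ∀ i, Irreducible (minpoly K (a i))) :
    IsField A :=
  isField_of_local_irreducible_minpoly_generators_general hgen <|
    Set.forall_mem_range.mpr fun i ↦ PerfectField.separable_of_irreducible (hirr i)
end

section
/- Let 𝒪 be an integral domain of characteristic zero which is finitely generated as a ℤ-module, and let T be a nontrivial commutative 𝒪-algebra which is finitely generated and torsion-free as an 𝒪-module. Then T is pure of Krull dimension 1: the Krull dimension of T equals 1, and every maximal ideal of T strictly contains some prime ideal of T (i.e. every maximal ideal has height 1). -/
/-!
An element of a minimal prime is a zero divisor. A nonzero `r : R` acts injectively on a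
torsion-free `R`-algebra `T`, so no prime of `T` lying over a nonzero prime of `R` is minimal. If
`T` is integral over `R` and `R` is a one-dimensional domain, the maximal ideals of `T` contract to
maximal, hence nonzero, ideals of `R`, so each of them strictly contains a prime. Incomparability
gives `dim T ≤ dim R = 1`. Applied to `ℤ → 𝒪`, this shows `dim 𝒪 = 1`, and it then applies again
to `𝒪 → T`.
-/

open scoped nonZeroDivisors

theorem ringKrullDim_le_of_isIntegral (R T : Type*) [CommRing R] [CommRing T] [Algebra R T]
    [Algebra.IsIntegral R T] : ringKrullDim T ≤ ringKrullDim R :=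
  Order.krullDim_le_of_strictMono (PrimeSpectrum.comap (algebraMap R T))
    fun 𝔭 𝔮 (h : 𝔭.asIdeal < 𝔮.asIdeal) ↦ Ideal.IsIntegral.comap_lt_comap h

theorem exists_isPrime_lt_of_mem_nonZeroDivisors {T : Type*} [CommRing T] {𝔮 : Ideal T}
    [𝔮.IsPrime] {x : T} (hx : x ∈ T⁰) (hx𝔮 : x ∈ 𝔮) : ∃ 𝔭 : Ideal T, 𝔭.IsPrime ∧ 𝔭 < 𝔮 := by
  obtain ⟨𝔭, h𝔭, h𝔭𝔮⟩ := Ideal.exists_minimalPrimes_le (bot_le : ⊥ ≤ 𝔮)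
  refine ⟨𝔭, h𝔭.isPrime, h𝔭𝔮.lt_of_ne ?_⟩
  rintro rfl
  exact notMem_nonZeroDivisors_of_mem_mem_minimalPrimes hx𝔮 h𝔭 hx

theorem algebraMap_mem_nonZeroDivisors_of_isRegular {R T : Type*} [CommRing R] [CommRing T]
    [Algebra R T] [Module.IsTorsionFree R T] {r : R} (hr : IsRegular r) :
    algebraMap R T r ∈ T⁰ := by
  refine mem_nonZeroDivisors_iff_right.mpr fun t ht ↦ hr.smul_eq_zero_iff_right.mp ?_
  rwa [Algebra.smul_def, mul_comm]

theorem exists_isPrime_lt_of_under_ne_bot (R : Type*) {T : Type*} [CommRing R] [IsDomain R]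
    [CommRing T] [Algebra R T] [Module.IsTorsionFree R T] {𝔮 : Ideal T} [𝔮.IsPrime]
    (h𝔮 : 𝔮.under R ≠ ⊥) : ∃ 𝔭 : Ideal T, 𝔭.IsPrime ∧ 𝔭 < 𝔮 := by
  obtain ⟨r, hr𝔮, hr⟩ := Submodule.exists_mem_ne_zero_of_ne_bot h𝔮
  exact exists_isPrime_lt_of_mem_nonZeroDivisors
    (algebraMap_mem_nonZeroDivisors_of_isRegular (.of_ne_zero hr)) hr𝔮

theorem exists_isPrime_lt_of_isMaximal_of_isIntegral {R T : Type*} [CommRing R] [IsDomain R]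
    [CommRing T] [Algebra R T] [Algebra.IsIntegral R T] [Module.IsTorsionFree R T]
    (hR : ¬ IsField R) (𝔪 : Ideal T) [𝔪.IsMaximal] : ∃ 𝔭 : Ideal T, 𝔭.IsPrime ∧ 𝔭 < 𝔪 :=
  have : (𝔪.under R).IsMaximal := Ideal.isMaximal_comap_of_isIntegral_of_isMaximal 𝔪
  exists_isPrime_lt_of_under_ne_bot R (Ideal.bot_lt_of_maximal (𝔪.under R) hR).ne'

theorem heckeAlgebra_pure_krullDim_one_general {R : Type*} (T : Type*) [CommRing R] [IsDomain R]
    [CommRing T] [Nontrivial T] [Algebra R T] [Algebra.IsIntegral R T] [Module.IsTorsionFree R T]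
    (hR : ringKrullDim R = 1) :
    ringKrullDim T = 1 ∧
      ∀ 𝔪 : Ideal T, 𝔪.IsMaximal → ∃ 𝔭 : Ideal T, 𝔭.IsPrime ∧ 𝔭 < 𝔪 := by
  have not_isField : ¬ IsField R := fun h ↦ by simp [ringKrullDim_eq_zero_of_isField h] at hR
  have exists_lt (𝔪 : Ideal T) (h𝔪 : 𝔪.IsMaximal) : ∃ 𝔭 : Ideal T, 𝔭.IsPrime ∧ 𝔭 < 𝔪 :=
    exists_isPrime_lt_of_isMaximal_of_isIntegral not_isField 𝔪
  obtain ⟨𝔪, h𝔪⟩ := Ideal.exists_maximal T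
  obtain ⟨𝔭, h𝔭, hlt⟩ := exists_lt 𝔪 h𝔪
  have le_one : ringKrullDim T ≤ 1 := hR ▸ ringKrullDim_le_of_isIntegral R T
  have one_le : 1 ≤ ringKrullDim T :=
    Order.one_le_krullDim_iff.mpr ⟨⟨𝔭, h𝔭⟩, ⟨𝔪, h𝔪.isPrime⟩, hlt⟩
  exact ⟨le_antisymm le_one one_le, exists_lt⟩

/-- Let `𝒪` be an integral domain of characteristic zero which is finitely generated as a
`ℤ`-module, and let `T` be a nontrivial commutative `𝒪`-algebra which is finitely generated
and torsion-free as an `𝒪`-module. Then `T` is pure of Krull dimension `1`: its Krull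
dimension is `1` and every maximal ideal of `T` strictly contains a prime ideal. -/
theorem heckeAlgebra_pure_krullDim_one
    (𝒪 T : Type*) [CommRing 𝒪] [IsDomain 𝒪] [CharZero 𝒪] [Module.Finite ℤ 𝒪]
    [CommRing T] [Nontrivial T] [Algebra 𝒪 T] [Module.Finite 𝒪 T] [NoZeroSMulDivisors 𝒪 T] :
    ringKrullDim T = 1 ∧
      ∀ 𝔪 : Ideal T, 𝔪.IsMaximal → ∃ 𝔭 : Ideal T, 𝔭.IsPrime ∧ 𝔭 < 𝔪 := by
  have ringKrullDim_order : ringKrullDim 𝒪 = 1 := (heckeAlgebra_pure_krullDim_one_general 𝒪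
    (IsPrincipalIdealRing.ringKrullDim_eq_one ℤ Int.not_isField)).1
  exact heckeAlgebra_pure_krullDim_one_general T ringKrullDim_order
end

section
/- Let T be a commutative ring which is finitely generated and torsion-free as a ℤ-module, let p be a prime number, and let f̄ : T → 𝔽̄_p be a ring homomorphism into an algebraic closure 𝔽̄_p of the field with p elements. Then there exist a ring homomorphism f : T → ℤ̄, where ℤ̄ is the integral closure of ℤ in an algebraic closure ℚ̄ of ℚ, and a ring homomorphism π : ℤ̄ → 𝔽̄_p, such that π ∘ f = f̄. -/
/-!
Choose a minimal prime `P` of `T` inside the prime ideal `ker f̄`. Elements of a minimal prime are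
zero divisors, so torsion-freeness keeps the nonzero scalars out of `P`; hence `T ⧸ P` is a domain
integral over the base and embeds into the algebraic closure in characteristic zero. This gives
`f : T → ℤ̄` with kernel `P ≤ ker f̄`. As `ℤ̄` is integral over `f T`, lying over provides a prime
`M` of `ℤ̄` above `ker f̄`, and `π` is an embedding of `ℤ̄ ⧸ M` over `T ⧸ ker f̄` into `𝔽̄ₚ`.
-/

theorem isTorsionFree_quotient_of_mem_minimalPrimes {R T : Type*} [CommRing R] [CommRing T]
    [Algebra R T] [Module.IsTorsionFree R T] {P : Ideal T} (hP : P ∈ minimalPrimes T) :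
    Module.IsTorsionFree R (T ⧸ P) := by
  have : P.IsPrime := hP.1.1
  refine .comap (algebraMap R (T ⧸ P)) (fun r hr ↦ ?_) (fun r x ↦ algebraMap_smul _ r x)
  have hrT : algebraMap R T r ∈ nonZeroDivisors T := by
    rw [mem_nonZeroDivisors_iff_left]
    intro x hx
    rwa [← Algebra.smul_def, hr.smul_eq_zero_iff_right] at hx
  exact .of_ne_zero fun hrP ↦
    notMem_nonZeroDivisors_of_mem_mem_minimalPrimes (Ideal.Quotient.eq_zero_iff_mem.mp hrP) hP hrT

theorem injective_algHom_of_isAlgebraic {R S A : Type*} [CommRing R] [CommRing S]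
    [NoZeroDivisors S] [Semiring A] [Algebra R S] [Algebra R A] [Algebra.IsAlgebraic R S]
    [FaithfulSMul R A] (g : S →ₐ[R] A) : Function.Injective g := by
  refine (injective_iff_map_eq_zero g).mpr fun x hgx ↦ ?_
  by_contra hx
  obtain ⟨r, hr, y, hy⟩ := (Algebra.IsAlgebraic.isAlgebraic (R := R) x).exists_nonzero_dvd
    (mem_nonZeroDivisors_of_ne_zero hx)
  refine hr (FaithfulSMul.algebraMap_injective R A ?_)
  rw [← g.commutes, hy, map_mul, hgx, zero_mul, map_zero]

theorem exists_algHom_ker_le {R T K : Type*} [CommRing R] [CommRing T] [Algebra R T]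
    [Algebra.IsAlgebraic R T] [Module.IsTorsionFree R T] [Field K] [IsAlgClosed K] [Algebra R K]
    [FaithfulSMul R K] (Q : Ideal T) [Q.IsPrime] :
    ∃ f : T →ₐ[R] K, RingHom.ker f ≤ Q := by
  obtain ⟨P, hP, hPQ⟩ := Ideal.exists_minimalPrimes_le (bot_le : ⊥ ≤ Q)
  have : P.IsPrime := hP.1.1
  have : IsDomain R := (FaithfulSMul.algebraMap_injective R K).isDomain
  have : Module.IsTorsionFree R (T ⧸ P) := isTorsionFree_quotient_of_mem_minimalPrimes hP
  have : Algebra.IsAlgebraic R (T ⧸ P) :=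
    ⟨Ideal.Quotient.mk_surjective.forall.mpr fun x ↦
      (Algebra.IsAlgebraic.isAlgebraic x).algHom (Ideal.Quotient.mkₐ R P)⟩
  let g : T ⧸ P →ₐ[R] K := IsAlgClosed.lift
  refine ⟨g.comp (Ideal.Quotient.mkₐ R P), fun x hx ↦ hPQ (Ideal.Quotient.eq_zero_iff_mem.mp ?_)⟩
  exact injective_algHom_of_isAlgebraic g (hx.trans (map_zero g).symm)

theorem nonempty_algHom_of_isIntegral_of_ker_le {A B F : Type*} [CommRing A] [CommRing B]
    [Algebra A B] [Algebra.IsIntegral A B] [Field F] [IsAlgClosed F] [Algebra A F]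
    (h : RingHom.ker (algebraMap A B) ≤ RingHom.ker (algebraMap A F)) :
    Nonempty (B →ₐ[A] F) := by
  let Q := RingHom.ker (algebraMap A F)
  have : Q.IsPrime := RingHom.ker_isPrime _
  obtain ⟨M, -, _, hMQ⟩ := Ideal.exists_ideal_over_prime_of_isIntegral Q ⊥ h
  have : M.LiesOver Q := ⟨hMQ.symm⟩
  let : Algebra (A ⧸ Q) F := (RingHom.kerLift (algebraMap A F)).toAlgebra
  have : IsScalarTower A (A ⧸ Q) F := .of_algebraMap_eq' rfl
  have : FaithfulSMul (A ⧸ Q) F :=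
    (faithfulSMul_iff_algebraMap_injective _ _).mpr (RingHom.kerLift_injective _)
  have : Module.IsTorsionFree (A ⧸ Q) (B ⧸ M) := FaithfulSMul.to_isTorsionFree _ _
  let g : B ⧸ M →ₐ[A ⧸ Q] F := IsAlgClosed.lift
  exact ⟨(g.restrictScalars A).comp (Ideal.Quotient.mkₐ A M)⟩

theorem exists_ringHom_comp_eq_of_isIntegral_of_ker_le {A B F : Type*} [CommRing A] [CommRing B]
    [Field F] [IsAlgClosed F] {f : A →+* B} (hf : f.IsIntegral) {g : A →+* F}
    (h : RingHom.ker f ≤ RingHom.ker g) :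
    ∃ π : B →+* F, π.comp f = g := by
  algebraize [f, g]
  obtain ⟨π⟩ := nonempty_algHom_of_isIntegral_of_ker_le (A := A) (B := B) (F := F) h
  exact ⟨π, π.comp_algebraMap⟩

theorem deligne_serre_lifting_general {R T K F : Type*} [CommRing R] [CommRing T] [Algebra R T]
    [Algebra.IsIntegral R T] [Module.IsTorsionFree R T] [Field K] [IsAlgClosed K] [Algebra R K]
    [FaithfulSMul R K] [Field F] [IsAlgClosed F] (fbar : T →+* F) :
    ∃ (f : T →ₐ[R] integralClosure R K) (π : integralClosure R K →+* F),
      π.comp (f : T →+* integralClosure R K) = fbar := by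
  have : Nontrivial R := (algebraMap R K).domain_nontrivial
  have : (RingHom.ker fbar).IsPrime := RingHom.ker_isPrime fbar
  obtain ⟨f₀, hf₀⟩ := exists_algHom_ker_le (R := R) (K := K) (RingHom.ker fbar)
  let f : T →ₐ[R] integralClosure R K :=
    f₀.codRestrict _ fun x ↦ (Algebra.IsIntegral.isIntegral x).map f₀
  have hf_integral : (f : T →+* integralClosure R K).IsIntegral := by
    refine RingHom.IsIntegral.tower_top (algebraMap R T) _ ?_
    rw [f.comp_algebraMap]
    exact algebraMap_isIntegral_iff.mpr inferInstance
  have hf_ker : RingHom.ker (f : T →+* integralClosure R K) ≤ RingHom.ker fbar :=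
    fun x hx ↦ hf₀ (congrArg Subtype.val hx)
  exact ⟨f, exists_ringHom_comp_eq_of_isIntegral_of_ker_le hf_integral hf_ker⟩

/-- Deligne–Serre lifting lemma (algebraic form). Let `T` be a commutative ring which is
finitely generated and torsion-free as a `ℤ`-module, `p` a prime, and `f̄ : T → 𝔽̄ₚ` a ring
homomorphism. Then `f̄` factors as `π ∘ f` for a ring homomorphism `f : T → ℤ̄` into the
integral closure `ℤ̄` of `ℤ` in `ℚ̄` and a ring homomorphism `π : ℤ̄ → 𝔽̄ₚ`. -/
theorem deligne_serre_lifting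
    (T : Type*) [CommRing T] [Module.Finite ℤ T] [NoZeroSMulDivisors ℤ T]
    (p : ℕ) [Fact p.Prime] (fbar : T →+* AlgebraicClosure (ZMod p)) :
    ∃ (f : T →+* integralClosure ℤ (AlgebraicClosure ℚ))
      (π : integralClosure ℤ (AlgebraicClosure ℚ) →+* AlgebraicClosure (ZMod p)),
      π.comp f = fbar := by
  obtain ⟨f, π, h⟩ := deligne_serre_lifting_general (R := ℤ) (K := AlgebraicClosure ℚ) fbar
  exact ⟨f, π, h⟩
end

section
/- Let R be a commutative ring, n ≥ 0 and N ≥ 1 integers such that n!·N (viewed in R) is a non-zero-divisor of R. Let f be a homogeneous polynomial of degree n in two variables X, Y over R. Then f is invariant under the R-algebra substitution (X, Y) ↦ (X, N·X + Y) if and only if f lies in the R-span of Xⁿ. (In other words, the invariants of V_n(R) = R[X,Y]_n under the matrix t = [[1,N],[0,1]] acting by (t.f)(X,Y) = f((X,Y)·t) are exactly R·Xⁿ.) -/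
open MvPolynomial

/-!
Setting `X = 1` is injective on forms of degree `n` and turns the substitution `Y ↦ c * X + Y` into
the Taylor shift `p(Y) ↦ p(Y + c)`. If `p` has degree `d ≠ 0` and leading coefficient `a`, then the
shift adds `a * d * c` to its coefficient of degree `d - 1`. Since `d ∣ n!`, this is nonzero when
`n! * c` is a non-zero-divisor, so only constants, that is, the multiples of `X ^ n`, are invariant.
-/

section

variable {R : Type*}

lemma taylor_coeff_of_natDegree_le_succ [Semiring R] {p : Polynomial R} {d : ℕ}
    (hp : p.natDegree ≤ d + 1) (r : R) :
    (Polynomial.taylor r p).coeff d = p.coeff d + p.coeff (d + 1) * (((d + 1 : ℕ) : R) * r) := by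
  have hderiv : (Polynomial.hasseDeriv d p).natDegree ≤ 1 :=
    (Polynomial.natDegree_hasseDeriv_le p d).trans (by omega)
  rw [Polynomial.taylor_coeff, Polynomial.eval_eq_sum_range' (Nat.lt_succ_of_le hderiv),
    Finset.sum_range_succ, Finset.sum_range_one]
  simp only [Polynomial.hasseDeriv_coeff, zero_add, Nat.choose_self, Nat.cast_one, one_mul,
    pow_zero, mul_one, pow_one, add_comm 1 d, Nat.choose_succ_self_right]
  rw [Nat.cast_comm, mul_assoc]

lemma taylor_ne_self [Semiring R] [IsCancelAdd R] {p : Polynomial R} {r : R}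
    (hp : p.leadingCoeff * ((p.natDegree : R) * r) ≠ 0) : Polynomial.taylor r p ≠ p := by
  intro h
  have hdeg : p.natDegree ≠ 0 := fun h0 ↦ hp (by rw [h0, Nat.cast_zero, zero_mul, mul_zero])
  obtain ⟨d, hd⟩ := Nat.exists_eq_add_one_of_ne_zero hdeg
  have hcoeff := taylor_coeff_of_natDegree_le_succ hd.le r
  rw [h, left_eq_add, ← hd] at hcoeff
  exact hp hcoeff

lemma natDegree_eq_zero_of_taylor_eq_self [CommSemiring R] [IsCancelAdd R] {p : Polynomial R}
    {n : ℕ} {r : R} (hp : p.natDegree ≤ n) (hr : (n.factorial : R) * r ∈ nonZeroDivisors R)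
    (h : Polynomial.taylor r p = p) : p.natDegree = 0 := by
  by_contra hdeg
  obtain ⟨k, hk⟩ := Nat.dvd_factorial (Nat.pos_of_ne_zero hdeg) hp
  rw [hk, Nat.cast_mul, mul_right_comm] at hr
  have hreg : (p.natDegree : R) * r ∈ nonZeroDivisors R := (mul_mem_nonZeroDivisors.1 hr).1
  have hlead : p.leadingCoeff ≠ 0 :=
    Polynomial.leadingCoeff_ne_zero.2
      (Polynomial.ne_zero_of_natDegree_gt (Nat.pos_of_ne_zero hdeg))
  exact taylor_ne_self (fun hmul ↦ hlead (hreg.2 _ hmul)) h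

end

section

variable {R : Type*} [CommSemiring R]

/-- The substitution `(X, Y) ↦ (X, c * X + Y)`, that is, the action of the unipotent matrix
`[[1, c], [0, 1]]` on `R[X, Y]`, where `X` and `Y` are encoded as `X 0` and `X 1`. -/
noncomputable def shear (c : R) : MvPolynomial (Fin 2) R →ₐ[R] MvPolynomial (Fin 2) R :=
  aeval ![X 0, C c * X 0 + X 1]

/-- Dehomogenization at `X = 1`: the substitution `(X, Y) ↦ (1, Y)`, with `Y = X 1` becoming the
variable of the univariate polynomial. It reduces questions on binary forms to one variable. -/
noncomputable def dehomogenize : MvPolynomial (Fin 2) R →ₐ[R] Polynomial R :=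
  aeval ![1, Polynomial.X]

lemma dehomogenize_shear (c : R) (f : MvPolynomial (Fin 2) R) :
    dehomogenize (shear c f) = Polynomial.taylor c (dehomogenize f) := by
  suffices dehomogenize.comp (shear c) = (Polynomial.taylorAlgHom c).comp dehomogenize from
    DFunLike.congr_fun this f
  ext i : 1
  fin_cases i <;> simp [dehomogenize, shear, add_comm]

lemma natDegree_dehomogenize_le (f : MvPolynomial (Fin 2) R) :
    (dehomogenize f).natDegree ≤ f.totalDegree := by
  rw [← mul_one f.totalDegree]
  refine aeval_natDegree_le f le_rfl _ fun i ↦ ?_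
  fin_cases i
  · simp
  · exact Polynomial.natDegree_X_le

lemma eq_of_dehomogenize_eq {n : ℕ} {f g : MvPolynomial (Fin 2) R} (hf : f.IsHomogeneous n)
    (hg : g.IsHomogeneous n) (h : dehomogenize f = dehomogenize g) : f = g := by
  -- Mathlib's `Polynomial.homogenize` inverts the dehomogenization at the other variable.
  have aeval_rename_swap (q : MvPolynomial (Fin 2) R) :
      aeval ![Polynomial.X, 1] (rename (Equiv.swap 0 1) q) = dehomogenize q := by
    rw [aeval_rename, dehomogenize]
    congr 2
    ext i : 1
    fin_cases i <;> simp
  apply rename_injective _ (Equiv.swap (0 : Fin 2) 1).injective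
  rw [← Polynomial.homogenize_eq_of_isHomogeneous hf.rename_isHomogeneous (aeval_rename_swap f),
    ← Polynomial.homogenize_eq_of_isHomogeneous hg.rename_isHomogeneous (aeval_rename_swap g), h]

lemma dehomogenize_smul_X_pow (a : R) (n : ℕ) :
    dehomogenize (a • X 0 ^ n) = Polynomial.C a := by
  simp [dehomogenize, Polynomial.smul_eq_C_mul]

lemma shear_smul_X_pow (c a : R) (n : ℕ) : shear c (a • X 0 ^ n) = a • X 0 ^ n := by
  simp [shear]

theorem vn_invariants_eq_span_Xn_general [IsCancelAdd R] {n : ℕ} {c : R}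
    (hc : (n.factorial : R) * c ∈ nonZeroDivisors R) {f : MvPolynomial (Fin 2) R}
    (hf : f.IsHomogeneous n) :
    shear c f = f ↔ f ∈ Submodule.span R {(X 0 : MvPolynomial (Fin 2) R) ^ n} := by
  rw [Submodule.mem_span_singleton]
  constructor
  · intro hinv
    have hshift : Polynomial.taylor c (dehomogenize f) = dehomogenize f := by
      rw [← dehomogenize_shear, hinv]
    have hdeg : (dehomogenize f).natDegree = 0 := natDegree_eq_zero_of_taylor_eq_self
      ((natDegree_dehomogenize_le f).trans hf.totalDegree_le) hc hshift
    obtain ⟨a, ha⟩ := Polynomial.natDegree_eq_zero.1 hdeg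
    have hmonomial : (a • X 0 ^ n : MvPolynomial (Fin 2) R).IsHomogeneous n :=
      (homogeneousSubmodule (Fin 2) R n).smul_mem a (isHomogeneous_X_pow 0 n)
    refine ⟨a, eq_of_dehomogenize_eq hmonomial hf ?_⟩
    rw [dehomogenize_smul_X_pow, ha]
  · rintro ⟨a, rfl⟩
    exact shear_smul_X_pow c a n

end

/-- Let `R` be a commutative ring and `n, N` with `N ≥ 1` such that `n!·N` is a
non-zero-divisor in `R`. A homogeneous polynomial `f ∈ R[X,Y]` of degree `n` satisfies
`f(X, N·X + Y) = f(X, Y)` (i.e. is invariant under the matrix `[[1,N],[0,1]]`) if and only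
if `f` lies in the `R`-span of `Xⁿ`. -/
theorem vn_invariants_eq_span_Xn
    (R : Type*) [CommRing R] (n N : ℕ) (hN : 1 ≤ N)
    (hreg : ((n.factorial * N : ℕ) : R) ∈ nonZeroDivisors R)
    (f : MvPolynomial (Fin 2) R) (hf : f.IsHomogeneous n) :
    aeval ![(X 0 : MvPolynomial (Fin 2) R), (N : MvPolynomial (Fin 2) R) * X 0 + X 1] f = f ↔
      f ∈ Submodule.span R {(X 0 : MvPolynomial (Fin 2) R) ^ n} := by
  simpa only [shear, map_natCast] using
    vn_invariants_eq_span_Xn_general (c := (N : R)) (by exact_mod_cast hreg) hf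
end

section
/- Let 𝓕 := {z ∈ ℂ : Im z > 0, |z| > 1, |Re z| < 1/2} be the standard fundamental domain for the action of SL₂(ℤ) on the upper half-plane. Then the hyperbolic area of 𝓕 equals π/3, i.e. ∫_𝓕 (Im z)^{-2} dμ(z) = π/3, where μ is Lebesgue measure on ℂ ≅ ℝ² (so the integral is ∫∫_𝓕 dx dy / y² with z = x + iy). -/
open MeasureTheory

/-!
The domain is the part of the strip `|Re z| < 1/2` above the unit circle. Integrating `1 / y ^ 2`
vertically from the circle to `∞` leaves `∫ dx / √(1 - x ^ 2)` over `(-1/2, 1/2)`, which is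
`arcsin (1/2) - arcsin (-1/2) = π/6 + π/6`.
-/

lemma setLIntegral_prod_eq_lintegral_preimage {α β : Type*} [MeasurableSpace α]
    [MeasurableSpace β] {μ : Measure α} {ν : Measure β} [SFinite ν] {S : Set (α × β)}
    (hS : MeasurableSet S) {g : α × β → ENNReal} (hg : Measurable g) :
    ∫⁻ p in S, g p ∂μ.prod ν = ∫⁻ x, ∫⁻ y in Prod.mk x ⁻¹' S, g (x, y) ∂ν ∂μ := by
  rw [← lintegral_indicator hS, lintegral_prod _ (hg.indicator hS).aemeasurable]
  exact lintegral_congr fun x => lintegral_indicator (measurable_prodMk_left hS) fun y => g (x, y)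

lemma setLIntegral_complex_eq_lintegral_lintegral {S : Set ℂ} (hS : MeasurableSet S)
    {g : ℂ → ENNReal} (hg : Measurable g) :
    ∫⁻ z in S, g z = ∫⁻ x : ℝ, ∫⁻ y in {y : ℝ | (⟨x, y⟩ : ℂ) ∈ S}, g ⟨x, y⟩ := by
  let e := Complex.measurableEquivRealProd.symm
  rw [← Complex.volume_preserving_equiv_real_prod.symm.setLIntegral_comp_preimage hS hg]
  exact setLIntegral_prod_eq_lintegral_preimage (e.measurable hS) (hg.comp e.measurable)

/-- The part of the complex plane lying over `s ⊆ ℝ` and strictly above the graph of `f`; the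
one-sided analogue of `regionBetween`, with `ℂ` in place of `ℝ × ℝ`. -/
def regionAbove (f : ℝ → ℝ) (s : Set ℝ) : Set ℂ :=
  {z | z.re ∈ s ∧ f z.re < z.im}

section RegionAbove

variable {f : ℝ → ℝ} {s : Set ℝ}

lemma measurableSet_regionAbove (hf : Measurable f) (hs : MeasurableSet s) :
    MeasurableSet (regionAbove f s) :=
  (Complex.measurable_re hs).inter
    (measurableSet_lt (hf.comp Complex.measurable_re) Complex.measurable_im)

lemma setLIntegral_regionAbove (hf : Measurable f) (hs : MeasurableSet s) {g : ℂ → ENNReal}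
    (hg : Measurable g) :
    ∫⁻ z in regionAbove f s, g z = ∫⁻ x in s, ∫⁻ y in Set.Ioi (f x), g ⟨x, y⟩ := by
  rw [setLIntegral_complex_eq_lintegral_lintegral (measurableSet_regionAbove hf hs) hg,
    ← lintegral_indicator hs]
  refine lintegral_congr fun x => ?_
  by_cases hx : x ∈ s
  · simp [regionAbove, hx, Set.Ioi_def]
  · simp [regionAbove, hx]

end RegionAbove

lemma lintegral_Ioi_rpow_of_lt {a c : ℝ} (ha : a < -1) (hc : 0 < c) :
    ∫⁻ y in Set.Ioi c, ENNReal.ofReal (y ^ a) = ENNReal.ofReal (-c ^ (a + 1) / (a + 1)) := by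
  have nonneg : ∀ᵐ y ∂volume.restrict (Set.Ioi c), 0 ≤ y ^ a :=
    ae_restrict_of_forall_mem measurableSet_Ioi fun y hy => Real.rpow_nonneg (hc.trans hy).le a
  rw [← ofReal_integral_eq_lintegral_ofReal (integrableOn_Ioi_rpow_of_lt ha hc) nonneg,
    integral_Ioi_rpow_of_lt ha hc]

lemma lintegral_Ioi_one_div_sq {c : ℝ} (hc : 0 < c) :
    ∫⁻ y in Set.Ioi c, ENNReal.ofReal (1 / y ^ 2) = ENNReal.ofReal (1 / c) := by
  have rpow_neg_two (y : ℝ) (hy : y ∈ Set.Ioi c) :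
      ENNReal.ofReal (1 / y ^ 2) = ENNReal.ofReal (y ^ (-2 : ℝ)) := by
    rw [Real.rpow_neg (hc.trans hy).le, Real.rpow_two, one_div]
  rw [setLIntegral_congr_fun measurableSet_Ioi rpow_neg_two,
    lintegral_Ioi_rpow_of_lt (by norm_num) hc]
  norm_num [Real.rpow_neg_one]

lemma setIntegral_regionAbove_one_div_im_sq {f : ℝ → ℝ} {s : Set ℝ} (hf : Measurable f)
    (hs : MeasurableSet s) (hpos : ∀ x ∈ s, 0 < f x) :
    ∫ z in regionAbove f s, 1 / z.im ^ 2 = ∫ x in s, 1 / f x := by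
  have nonneg : ∀ᵐ x ∂volume.restrict s, 0 ≤ 1 / f x :=
    ae_restrict_of_forall_mem hs fun x hx => (one_div_pos.2 (hpos x hx)).le
  have measurable_density : Measurable fun z : ℂ => 1 / z.im ^ 2 := by fun_prop
  rw [integral_eq_lintegral_of_nonneg_ae (ae_of_all _ fun z => by positivity)
      measurable_density.aestronglyMeasurable,
    integral_eq_lintegral_of_nonneg_ae nonneg (hf.const_div 1).aestronglyMeasurable,
    setLIntegral_regionAbove hf hs measurable_density.ennreal_ofReal]
  congr 1
  exact setLIntegral_congr_fun hs fun x hx => lintegral_Ioi_one_div_sq (hpos x hx)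

-- Where `1 < |z.re|` the square root is the junk value `0`, the correct lower bound for `z.im`.
lemma sqrt_one_sub_re_sq_lt_im_iff {z : ℂ} :
    √(1 - z.re ^ 2) < z.im ↔ 0 < z.im ∧ 1 < ‖z‖ := by
  have one_lt_norm_iff : 1 < ‖z‖ ↔ 1 - z.re ^ 2 < z.im ^ 2 := by
    rw [← one_lt_sq_iff₀ (norm_nonneg z), Complex.sq_norm, Complex.normSq_apply, ← sq, ← sq,
      sub_lt_iff_lt_add']
  rw [one_lt_norm_iff]
  constructor
  · intro h
    have im_pos : 0 < z.im := (Real.sqrt_nonneg _).trans_lt h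
    exact ⟨im_pos, (Real.sqrt_lt' im_pos).1 h⟩
  · rintro ⟨im_pos, h⟩
    exact (Real.sqrt_lt' im_pos).2 h

lemma integral_one_div_sqrt_one_sub_sq {a b : ℝ} (ha : a ∈ Set.Icc (-1) 1)
    (hb : b ∈ Set.Icc (-1) 1) :
    ∫ x in a..b, 1 / √(1 - x ^ 2) = Real.arcsin b - Real.arcsin a := by
  have hderiv (x : ℝ) (hx : x ∈ Set.Ioo (min a b) (max a b)) :
      HasDerivAt Real.arcsin (1 / √(1 - x ^ 2)) x :=
    Real.hasDerivAt_arcsin ((le_min ha.1 hb.1).trans_lt hx.1).ne'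
      (hx.2.trans_le (max_le ha.2 hb.2)).ne
  have hcont : ContinuousOn Real.arcsin (Set.uIcc a b) := Real.continuous_arcsin.continuousOn
  exact intervalIntegral.integral_eq_sub_of_hasDeriv_right hcont
    (fun x hx => (hderiv x hx).hasDerivWithinAt)
    (intervalIntegral.intervalIntegrable_deriv_of_nonneg hcont hderiv fun x _ => by positivity)

lemma setIntegral_regionAbove_unitCircle_one_div_im_sq {a b : ℝ} (ha : -1 ≤ a) (hab : a ≤ b)
    (hb : b ≤ 1) :
    ∫ z in regionAbove (fun x => √(1 - x ^ 2)) (Set.Ioo a b), 1 / z.im ^ 2 =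
      Real.arcsin b - Real.arcsin a := by
  have sqrt_pos (x : ℝ) (hx : x ∈ Set.Ioo a b) : 0 < √(1 - x ^ 2) :=
    Real.sqrt_pos.2 (by nlinarith [hx.1, hx.2])
  rw [setIntegral_regionAbove_one_div_im_sq (by fun_prop) measurableSet_Ioo sqrt_pos,
    ← integral_Ioc_eq_integral_Ioo, ← intervalIntegral.integral_of_le hab,
    integral_one_div_sqrt_one_sub_sq ⟨ha, hab.trans hb⟩ ⟨ha.trans hab, hb⟩]

lemma arcsin_one_half : Real.arcsin (1 / 2) = Real.pi / 6 :=
  Real.arcsin_eq_of_sin_eq Real.sin_pi_div_six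
    ⟨by linarith [Real.pi_pos], by linarith [Real.pi_pos]⟩

/-- The hyperbolic area of the standard fundamental domain
`𝓕 = {z ∈ ℍ : |z| > 1, |Re z| < 1/2}` for the action of `SL₂(ℤ)` on the upper half-plane
equals `π/3`:  `∫∫_𝓕 dx dy / y² = π/3`. -/
theorem standard_fundamental_domain_area :
    ∫ z in {z : ℂ | 0 < z.im ∧ 1 < ‖z‖ ∧ |z.re| < 1 / 2}, 1 / z.im ^ 2 =
      Real.pi / 3 := by
  have domain_eq : {z : ℂ | 0 < z.im ∧ 1 < ‖z‖ ∧ |z.re| < 1 / 2} =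
      regionAbove (fun x => √(1 - x ^ 2)) (Set.Ioo (-(1 / 2)) (1 / 2)) := by
    ext z
    simp only [regionAbove, Set.mem_ofPred_eq, Set.mem_Ioo, abs_lt, sqrt_one_sub_re_sq_lt_im_iff]
    tauto
  rw [domain_eq, setIntegral_regionAbove_unitCircle_one_div_im_sq (by norm_num) (by norm_num)
    (by norm_num), Real.arcsin_neg, arcsin_one_half]
  ring
end

section
/- Let N and n be positive integers, and let A = (a b; c d) be a 2×2 integer matrix with det A = n, N ∣ c, and gcd(a, N) = 1 (i.e. A ∈ Δ₀ⁿ(N)). Then there exist unique integers a', b' and a unique γ ∈ Γ₀(N) such that a' > 0, a' divides n, gcd(a', N) = 1, 0 ≤ b' < n/a', and A = γ · (a' b'; 0 n/a'). In other words, Δ₀ⁿ(N) is the disjoint union of the right cosets Γ₀(N)·(a b; 0 d) over all positive divisors a of n coprime to N, with d = n/a and 0 ≤ b < d. -/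
open scoped MatrixGroups

/-! `SL(2, ℤ)` acts freely on the integer matrices of a fixed determinant `m ≠ 0`, and each orbit
contains exactly one matrix in Hermite normal form `(a b; 0 m/a)`. If
`A = γ * (a b; 0 m/a)` then `A 0 0 = γ 0 0 * a` and `A 1 0 = γ 1 0 * a`. Thus `a` inherits
coprimality to `N` from `A 0 0`, and then `N ∣ A 1 0` forces `N ∣ γ 1 0`, i.e. `γ ∈ Γ₀(N)`. -/

section

open FixedDetMatrices CongruenceSubgroup

variable {m : ℤ}

lemma exists_smul_mem_reps (hm : m ≠ 0) (A : FixedDetMatrix (Fin 2) ℤ m) :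
    ∃ γ : SL(2, ℤ), γ • A ∈ reps m := by
  refine FixedDetMatrices.induction_on (C := fun A ↦ ∃ γ : SL(2, ℤ), γ • A ∈ reps m) hm ?_ ?_ ?_
  · intro A h10 h00 h01 h11
    exact ⟨1, (one_smul SL(2, ℤ) A).symm ▸ ⟨h10, h00, h01, h11⟩⟩
  · rintro A ⟨γ, hγ⟩
    exact ⟨γ * ModularGroup.S⁻¹, by rwa [mul_smul, inv_smul_smul]⟩
  · rintro A ⟨γ, hγ⟩
    exact ⟨γ * ModularGroup.T⁻¹, by rwa [mul_smul, inv_smul_smul]⟩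

lemma eq_zero_of_add_mul_mem_Ico {b k d : ℤ} (hb : b ∈ Set.Ico 0 |d|)
    (hbk : b + k * d ∈ Set.Ico 0 |d|) : k = 0 := by
  have hlt : |k| * |d| < 1 * |d| := by
    simpa [abs_mul] using abs_sub_lt_of_nonneg_of_lt hbk.1 hbk.2 hb.1 hb.2
  exact Int.abs_lt_one_iff.1 (lt_of_mul_lt_mul_right hlt (abs_nonneg d))

lemma eq_one_of_smul_mem_reps {γ : SL(2, ℤ)} {B : FixedDetMatrix (Fin 2) ℤ m}
    (hB : B ∈ reps m) (hγB : γ • B ∈ reps m) : γ = 1 := by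
  obtain ⟨hB10, hB00, hB01, hB11⟩ := hB
  obtain ⟨h10, h00, h01, h11⟩ := hγB
  simp only [smul_coe, Matrix.mul_apply, Fin.sum_univ_two, hB10, mul_zero, add_zero]
    at h10 h00 h01 h11
  have hγ10 : γ 1 0 = 0 := (mul_eq_zero.1 h10).resolve_right hB00.ne'
  have hγ00_pos : 0 < γ 0 0 := pos_of_mul_pos_left h00 hB00.le
  have hdiag : γ 0 0 * γ 1 1 = 1 := by
    simpa only [Matrix.det_fin_two, hγ10, mul_zero, sub_zero] using γ.det_coe
  have hγ00 : γ 0 0 = 1 := Int.eq_one_of_mul_eq_one_right hγ00_pos.le hdiag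
  have hγ11 : γ 1 1 = 1 := by simpa [hγ00] using hdiag
  simp only [hγ10, hγ00, hγ11, one_mul, zero_mul, zero_add] at h01 h11
  have hγ01 : γ 0 1 = 0 := eq_zero_of_add_mul_mem_Ico
    ⟨hB01, (le_abs_self _).trans_lt hB11⟩ ⟨h01, (le_abs_self _).trans_lt h11⟩
  ext i j
  fin_cases i <;> fin_cases j <;> simp [hγ00, hγ01, hγ10, hγ11]

theorem bijective_smul_reps (hm : m ≠ 0) :
    Function.Bijective fun p : SL(2, ℤ) × reps m ↦ p.1 • p.2.1 := by
  constructor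
  · rintro ⟨γ, B, hB⟩ ⟨γ', B', hB'⟩ (h : γ • B = γ' • B')
    have hB_eq : B = (γ⁻¹ * γ') • B' := by rw [mul_smul, ← h, inv_smul_smul]
    obtain rfl : γ = γ' := inv_mul_eq_one.1 (eq_one_of_smul_mem_reps hB' (hB_eq ▸ hB))
    obtain rfl : B = B' := smul_left_cancel γ h
    rfl
  · intro A
    obtain ⟨γ, hγ⟩ := exists_smul_mem_reps hm A
    exact ⟨(γ⁻¹, ⟨γ • A, hγ⟩), inv_smul_smul γ A⟩

/-- The upper triangular matrix `(a b; 0 m/a)` of determinant `m`, the shape of a Hermite normal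
form; the divisibility `a ∣ m` makes the integer quotient exact. -/
def upperTriangular (a b : ℤ) (ha : a ∣ m) : FixedDetMatrix (Fin 2) ℤ m :=
  ⟨!![a, b; 0, m / a], by simp [Int.mul_ediv_cancel' ha]⟩

lemma coe_upperTriangular (a b : ℤ) (ha : a ∣ m) :
    (upperTriangular a b ha).1 = !![a, b; 0, m / a] := rfl

lemma upperTriangular_mem_reps_iff {a b : ℤ} (ha : a ∣ m) :
    upperTriangular a b ha ∈ reps m ↔ 0 < a ∧ 0 ≤ b ∧ b < |m| / a := by
  have habs (ha0 : 0 < a) : |m / a| = |m| / a := by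
    obtain ⟨d, rfl⟩ := ha
    rw [abs_mul, abs_of_pos ha0, Int.mul_ediv_cancel_left _ ha0.ne',
      Int.mul_ediv_cancel_left _ ha0.ne']
  calc upperTriangular a b ha ∈ reps m
      ↔ 0 = 0 ∧ 0 < a ∧ 0 ≤ b ∧ |b| < |m / a| := Iff.rfl
    _ ↔ 0 < a ∧ 0 ≤ b ∧ b < |m| / a := by simp +contextual [habs, abs_of_nonneg]

lemma exists_eq_upperTriangular_of_mem_reps {B : FixedDetMatrix (Fin 2) ℤ m} (hB : B ∈ reps m) :
    ∃ (a b : ℤ) (ha : a ∣ m), B = upperTriangular a b ha := by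
  obtain ⟨h10, h00, -, -⟩ := hB
  have hdet : m = B.1 0 0 * B.1 1 1 := by simpa [Matrix.det_fin_two, h10] using B.2.symm
  have h11 : m / B.1 0 0 = B.1 1 1 := Int.ediv_eq_of_eq_mul_right h00.ne' hdet
  refine ⟨B.1 0 0, B.1 0 1, ⟨_, hdet⟩, FixedDetMatrices.ext' _ _ ?_⟩
  rw [coe_upperTriangular, h11, ← h10]
  exact Matrix.eta_fin_two B.1

lemma mem_Gamma0_of_dvd_mul {N : ℕ} {γ : SL(2, ℤ)} {a : ℤ} (ha : IsCoprime a N)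
    (h : (N : ℤ) ∣ γ 1 0 * a) : γ ∈ Gamma0 N := by
  rw [Gamma0_mem, ZMod.intCast_zmod_eq_zero_iff_dvd]
  exact ha.symm.dvd_of_dvd_mul_right h

theorem delta0_coset_decomposition_general
    (N : ℕ) (n : ℤ) (hn : n ≠ 0)
    (A : Matrix (Fin 2) (Fin 2) ℤ) (hdet : A.det = n)
    (hc : (N : ℤ) ∣ A 1 0) (ha : IsCoprime (A 0 0) (N : ℤ)) :
    ∃! x : ℤ × ℤ × Gamma0 N,
      0 < x.1 ∧ x.1 ∣ n ∧ IsCoprime x.1 (N : ℤ) ∧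
      0 ≤ x.2.1 ∧ x.2.1 < |n| / x.1 ∧
      A = ((x.2.2 : SL(2, ℤ)) : Matrix (Fin 2) (Fin 2) ℤ) * !![x.1, x.2.1; 0, n / x.1] := by
  obtain ⟨hinj, hsurj⟩ := bijective_smul_reps hn
  apply existsUnique_of_exists_of_unique
  · obtain ⟨⟨γ, B, hB⟩, hA : γ • B = ⟨A, hdet⟩⟩ := hsurj ⟨A, hdet⟩
    obtain ⟨a, b, had, rfl⟩ := exists_eq_upperTriangular_of_mem_reps hB
    obtain ⟨ha0, hb0, hb⟩ := (upperTriangular_mem_reps_iff had).1 hB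
    obtain rfl : γ * !![a, b; 0, n / a] = A := congrArg Subtype.val hA
    simp only [Matrix.mul_apply, Fin.sum_univ_two, Matrix.of_apply, Matrix.cons_val] at hc ha
    have haN : IsCoprime a N := ha.of_isCoprime_of_dvd_left (by simp)
    have hγ : γ ∈ Gamma0 N := mem_Gamma0_of_dvd_mul haN (by simpa using hc)
    exact ⟨(a, b, ⟨γ, hγ⟩), ha0, had, haN, hb0, hb, rfl⟩
  · rintro ⟨a, b, γ⟩ ⟨a', b', γ'⟩ ⟨ha0, had, -, hb0, hb, hA⟩ ⟨ha0', had', -, hb0', hb', hA'⟩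
    have heq := @hinj (γ, ⟨_, (upperTriangular_mem_reps_iff had).2 ⟨ha0, hb0, hb⟩⟩)
      (γ', ⟨_, (upperTriangular_mem_reps_iff had').2 ⟨ha0', hb0', hb'⟩⟩)
      (FixedDetMatrices.ext' _ _ (hA.symm.trans hA'))
    obtain ⟨hγ, hB⟩ := Prod.mk.inj heq
    have hentries := congrFun₂ (congrArg Subtype.val (congrArg Subtype.val hB))
    exact Prod.ext (hentries 0 0) (Prod.ext (hentries 0 1) (Subtype.ext hγ))

end

/-- Coset decomposition of `Δ₀ⁿ(N)`: every integer matrix `A` of determinant `n ≥ 1` whose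
lower-left entry is divisible by `N` and whose upper-left entry is coprime to `N` can be
written uniquely as `A = γ · [[a, b], [0, n/a]]` with `γ ∈ Γ₀(N)`, `a > 0`, `a ∣ n`,
`gcd(a, N) = 1` and `0 ≤ b < n/a`. -/
theorem delta0_coset_decomposition
    (N n : ℕ) (hN : 0 < N) (hn : 0 < n)
    (A : Matrix (Fin 2) (Fin 2) ℤ) (hdet : A.det = (n : ℤ))
    (hc : (N : ℤ) ∣ A 1 0) (ha : IsCoprime (A 0 0) (N : ℤ)) :
    ∃! x : ℤ × ℤ × CongruenceSubgroup.Gamma0 N,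
      0 < x.1 ∧ x.1 ∣ (n : ℤ) ∧ IsCoprime x.1 (N : ℤ) ∧
      0 ≤ x.2.1 ∧ x.2.1 < (n : ℤ) / x.1 ∧
      A = ((x.2.2 : SL(2, ℤ)) : Matrix (Fin 2) (Fin 2) ℤ) *
        !![x.1, x.2.1; 0, (n : ℤ) / x.1] := by
  simpa only [hdet, Nat.abs_cast] using
    delta0_coset_decomposition_general N n (Nat.cast_ne_zero.2 hn.ne') A hdet hc ha
end

section
/- Let G be a group, Γ ≤ G a subgroup, and α, β ∈ G. Suppose Γ·α·Γ = ⨆_{i∈I} Γ·α_i and Γ·β·Γ = ⨆_{j∈J} Γ·β_j are decompositions of the double cosets into pairwise disjoint right cosets, with I and J finite. For γ ∈ G put m(γ) := #{(i, j) ∈ I × J : Γ·(α_i·β_j) = Γ·γ}. Then m(γ) depends only on the double coset of γ: if γ, γ' ∈ G satisfy Γ·γ·Γ = Γ·γ'·Γ, then m(γ) = m(γ'). (This is the well-definedness of the multiplicities in the multiplication of the Hecke ring R(Δ, Γ).) -/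
/-!
Right translation by `k ∈ K` permutes the cosets `H·cᵢ` making up a set stable under `K`, so the
number of `i` with `H·cᵢ = H·γ` is unchanged when `γ` is replaced by `γ·k`. The point is that being
permuted by translation, with multiplicities, is inherited by products: if `H·aᵢ` is permuted by `K`
and `K·bⱼ` by `L`, then `H·(aᵢ·bⱼ)` is permuted by `L`: for `l ∈ L` one has `bⱼ·l = c·b_{σ j}` with
`c ∈ K`, and this `c`, which depends on `j`, permutes the cosets `H·aᵢ`.
-/

section RightCosets

open MulOpposite DoubleCoset
open scoped Pointwise

variable {G : Type*} [Group G] {H K L : Subgroup G} {I J : Type*}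

theorem rightCoset_mul_of_mem {h : G} (hh : h ∈ H) (x : G) :
    op (h * x) • (H : Set G) = op x • (H : Set G) := by
  rw [← rightCoset_assoc, rightCoset_mem_rightCoset H hh]

theorem rightCoset_eq_of_mem {x y : G} (hx : x ∈ op y • (H : Set G)) :
    op x • (H : Set G) = op y • (H : Set G) := by
  obtain ⟨h, hh, rfl⟩ := hx
  exact rightCoset_mul_of_mem hh y

theorem rightCoset_mul_eq_mul_iff {x y : G} (z : G) :
    op (x * z) • (H : Set G) = op (y * z) • (H : Set G) ↔
      op x • (H : Set G) = op y • (H : Set G) := by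
  rw [← rightCoset_assoc, ← rightCoset_assoc, smul_left_cancel_iff]

theorem injective_rightCoset_of_pairwise_disjoint {a : I → G}
    (hdisj : Pairwise fun i i' => Disjoint (op (a i) • (H : Set G)) (op (a i') • (H : Set G))) :
    Function.Injective fun i => op (a i) • (H : Set G) :=
  Function.injective_iff_pairwise_ne.2 <| hdisj.mono fun i _ hd =>
    hd.ne (Set.nonempty_iff_ne_empty.1 ⟨a i, mem_own_rightCoset H.toSubmonoid (a i)⟩)

theorem mul_mem_doubleCoset_of_mem {α x k : G} (hx : x ∈ doubleCoset α H K) (hk : k ∈ K) :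
    x * k ∈ doubleCoset α H K := by
  obtain ⟨h, hh, k', hk', rfl⟩ := mem_doubleCoset.1 hx
  exact mem_doubleCoset.2 ⟨h, hh, k' * k, K.mul_mem hk' hk, mul_assoc _ _ _⟩

/-- The family of right cosets `H·aᵢ`, counted with multiplicities, is invariant under right
translation by `K`. It is encoded by the existence, for each `k ∈ K`, of a permutation `σ` of the
indices with `H·a_{σ i} = H·(aᵢ·k)`; repeated cosets are allowed because products `aᵢ·bⱼ` of two
transversals produce them. -/
def IsInvariantCosetFamily (H K : Subgroup G) (a : I → G) : Prop :=
  ∀ k ∈ K, ∃ σ : Equiv.Perm I, ∀ i, op (a (σ i)) • (H : Set G) = op (a i * k) • (H : Set G)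

namespace IsInvariantCosetFamily

theorem of_injective {a : I → G} (hinj : Function.Injective fun i => op (a i) • (H : Set G))
    (hstable : ∀ x ∈ ⋃ i, op (a i) • (H : Set G), ∀ k ∈ K, x * k ∈ ⋃ i, op (a i) • (H : Set G)) :
    IsInvariantCosetFamily H K a := by
  have exists_translate (k : K) (i : I) :
      ∃ i', op (a i') • (H : Set G) = op (a i * k) • (H : Set G) := by
    have hai : a i ∈ ⋃ i, op (a i) • (H : Set G) :=
      Set.mem_iUnion_of_mem i (mem_own_rightCoset H.toSubmonoid (a i))
    obtain ⟨i', hi'⟩ := Set.mem_iUnion.1 (hstable (a i) hai k k.2)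
    exact ⟨i', (rightCoset_eq_of_mem hi').symm⟩
  choose f hf using exists_translate
  have f_inv_f (k : K) (i : I) : f k⁻¹ (f k i) = i := hinj <| by
    calc op (a (f k⁻¹ (f k i))) • (H : Set G)
      _ = op (a (f k i) * (k : G)⁻¹) • (H : Set G) := hf k⁻¹ (f k i)
      _ = op (a i * k * (k : G)⁻¹) • (H : Set G) := (rightCoset_mul_eq_mul_iff _).2 (hf k i)
      _ = op (a i) • (H : Set G) := by rw [mul_inv_cancel_right]
  intro k hk
  lift k to K using hk
  exact ⟨⟨f k, f k⁻¹, f_inv_f k, fun i => by simpa only [inv_inv] using f_inv_f k⁻¹ i⟩, hf k⟩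

theorem of_iUnion_eq_doubleCoset {α : G} {a : I → G}
    (hcover : ⋃ i, op (a i) • (H : Set G) = doubleCoset α H K)
    (hdisj : Pairwise fun i i' => Disjoint (op (a i) • (H : Set G)) (op (a i') • (H : Set G))) :
    IsInvariantCosetFamily H K a :=
  of_injective (injective_rightCoset_of_pairwise_disjoint hdisj) <| by
    rw [hcover]
    exact fun _ hx _ hk => mul_mem_doubleCoset_of_mem hx hk

theorem mul {a : I → G} {b : J → G} (ha : IsInvariantCosetFamily H K a)
    (hb : IsInvariantCosetFamily K L b) :
    IsInvariantCosetFamily H L fun p : I × J => a p.1 * b p.2 := by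
  intro l hl
  obtain ⟨σ, hσ⟩ := hb l hl
  have hcarry (j : J) : b j * l * (b (σ j))⁻¹ ∈ K := (rightCoset_eq_iff K).1 (hσ j)
  choose τ hτ using fun j => ha _ (hcarry j)
  let e : Equiv.Perm (I × J) :=
    (Equiv.prodComm I J).trans ((Equiv.prodShear σ τ).trans (Equiv.prodComm J I))
  refine ⟨e, fun ⟨i, j⟩ => ?_⟩
  calc op (a (τ j i) * b (σ j)) • (H : Set G)
    _ = op (a i * (b j * l * (b (σ j))⁻¹) * b (σ j)) • (H : Set G) :=
      (rightCoset_mul_eq_mul_iff _).2 (hτ j i)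
    _ = op (a i * b j * l) • (H : Set G) := by
      simp only [mul_assoc, inv_mul_cancel, mul_one]

theorem nonempty_fiber_equiv {c : I → G} (hc : IsInvariantCosetFamily H K c) {γ γ' : G}
    (hγ : γ' ∈ doubleCoset γ H K) :
    Nonempty ({i // op (c i) • (H : Set G) = op γ • (H : Set G)} ≃
      {i // op (c i) • (H : Set G) = op γ' • (H : Set G)}) := by
  obtain ⟨h, hh, k, hk, rfl⟩ := mem_doubleCoset.1 hγ
  obtain ⟨σ, hσ⟩ := hc k hk
  refine ⟨σ.subtypeEquiv fun i => ?_⟩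
  rw [hσ, mul_assoc, rightCoset_mul_of_mem hh, rightCoset_mul_eq_mul_iff]

end IsInvariantCosetFamily

theorem heckeRing_multiplicity_well_defined_general {Γ₁ Γ₂ Γ₃ : Subgroup G} {α β : G}
    {a : I → G} {b : J → G}
    (hacover : ⋃ i, op (a i) • (Γ₁ : Set G) = doubleCoset α Γ₁ Γ₂)
    (hadisj : Pairwise fun i i' => Disjoint (op (a i) • (Γ₁ : Set G)) (op (a i') • (Γ₁ : Set G)))
    (hbcover : ⋃ j, op (b j) • (Γ₂ : Set G) = doubleCoset β Γ₂ Γ₃)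
    (hbdisj : Pairwise fun j j' => Disjoint (op (b j) • (Γ₂ : Set G)) (op (b j') • (Γ₂ : Set G)))
    {γ γ' : G} (h : doubleCoset γ Γ₁ Γ₃ = doubleCoset γ' Γ₁ Γ₃) :
    Nonempty
      ({p : I × J // op (a p.1 * b p.2) • (Γ₁ : Set G) = op γ • (Γ₁ : Set G)} ≃
        {p : I × J // op (a p.1 * b p.2) • (Γ₁ : Set G) = op γ' • (Γ₁ : Set G)}) := by
  have ha := IsInvariantCosetFamily.of_iUnion_eq_doubleCoset hacover hadisj
  have hb := IsInvariantCosetFamily.of_iUnion_eq_doubleCoset hbcover hbdisj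
  exact (ha.mul hb).nonempty_fiber_equiv (h ▸ mem_doubleCoset_self Γ₁ Γ₃ γ')

theorem setOf_eq_doubleCoset (H K : Subgroup G) (α : G) :
    {x : G | ∃ g ∈ H, ∃ h ∈ K, x = g * α * h} = doubleCoset α H K :=
  Set.ext fun _ => mem_doubleCoset.symm

end RightCosets

/-- Well-definedness of the multiplicities in the Hecke ring: given disjoint right coset
decompositions `Γ·α·Γ = ⨆ᵢ Γ·αᵢ` and `Γ·β·Γ = ⨆ⱼ Γ·βⱼ` (with finite index sets), the number
`m(γ) = #{(i,j) : Γ·(αᵢβⱼ) = Γ·γ}` only depends on the double coset `Γ·γ·Γ` of `γ`. -/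
theorem heckeRing_multiplicity_well_defined
    (G : Type*) [Group G] (Γ : Subgroup G) (α β : G)
    {I J : Type*} [Finite I] [Finite J] (a : I → G) (b : J → G)
    (hacover : (⋃ i, (fun g => g * a i) '' (Γ : Set G)) =
      {x : G | ∃ g ∈ Γ, ∃ h ∈ Γ, x = g * α * h})
    (hadisj : Pairwise fun i i' =>
      Disjoint ((fun g => g * a i) '' (Γ : Set G)) ((fun g => g * a i') '' (Γ : Set G)))
    (hbcover : (⋃ j, (fun g => g * b j) '' (Γ : Set G)) =
      {x : G | ∃ g ∈ Γ, ∃ h ∈ Γ, x = g * β * h})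
    (hbdisj : Pairwise fun j j' =>
      Disjoint ((fun g => g * b j) '' (Γ : Set G)) ((fun g => g * b j') '' (Γ : Set G)))
    (γ γ' : G)
    (h : {x : G | ∃ g ∈ Γ, ∃ h ∈ Γ, x = g * γ * h} =
      {x : G | ∃ g ∈ Γ, ∃ h ∈ Γ, x = g * γ' * h}) :
    Nat.card {p : I × J //
        (fun g => g * (a p.1 * b p.2)) '' (Γ : Set G) = (fun g => g * γ) '' (Γ : Set G)} =
      Nat.card {p : I × J //
        (fun g => g * (a p.1 * b p.2)) '' (Γ : Set G) = (fun g => g * γ') '' (Γ : Set G)} := by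
  simp only [setOf_eq_doubleCoset] at hacover hbcover h
  exact Nat.card_congr
    (heckeRing_multiplicity_well_defined_general hacover hadisj hbcover hbdisj h).some
end

section
/- Let R be a Noetherian commutative ring, S a commutative R-algebra that is flat as an R-module, M a finitely generated R-module, and (T_i)_{i∈ι} a family of R-linear endomorphisms of M. Let 𝕋_R ⊆ End_R(M) be the R-subalgebra generated by the T_i, and let 𝕋_S ⊆ End_S(S ⊗_R M) be the S-subalgebra generated by the base-changed endomorphisms id_S ⊗ T_i. Then the canonical S-algebra homomorphism 𝕋_R ⊗_R S → End_S(S ⊗_R M), induced by base change of endomorphisms T ↦ id_S ⊗ T, is injective and its image equals 𝕋_S; in particular 𝕋_R ⊗_R S ≅ 𝕋_S as S-algebras. -/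
open scoped TensorProduct

/-!
Let `m₁, …, mₙ` generate `M`. Evaluating at the generators embeds `Hom_R(M, N)` into `Nⁿ`.
By flatness `S ⊗ Hom_R(M, N)` embeds into `S ⊗ Nⁿ = (S ⊗ N)ⁿ`, and this embedding sends a tensor
to the values of the associated map `S ⊗ M → S ⊗ N` at the `1 ⊗ mᵢ`. Hence
`S ⊗ Hom_R(M, N) → Hom_S(S ⊗ M, S ⊗ N)` is injective, and flatness passes this on to
`S ⊗ 𝕋_R` for `𝕋_R ⊆ End_R(M)`. The image is `𝕋_S` because the `1 ⊗ Tᵢ` generate `S ⊗ 𝕋_R` over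
`S`.
-/

section LinearMaps

variable (R S : Type*) {M : Type*} (N : Type*) {ι : Type*} [CommSemiring R] [CommSemiring S]
  [Algebra R S] [AddCommMonoid M] [Module R M] [AddCommMonoid N] [Module R N]

/-- The `R`-linear map `Hom_R(M, N) → N^ι` evaluating a linear map at each member of the family
`v`; it realises `Hom_R(M, N)` inside a power of `N` when `v` spans `M`. -/
def evalFamily (v : ι → M) : (M →ₗ[R] N) →ₗ[R] ι → N :=
  LinearMap.pi fun i ↦ LinearMap.applyₗ (v i)

variable {R N}

@[simp]
theorem evalFamily_apply (v : ι → M) (f : M →ₗ[R] N) (i : ι) : evalFamily R N v f i = f (v i) :=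
  rfl

theorem evalFamily_injective {v : ι → M} (hv : Submodule.span R (Set.range v) = ⊤) :
    Function.Injective (evalFamily R N v) :=
  fun _ _ h ↦ LinearMap.ext_on_range hv (congrFun h)

theorem linearMapTensorProduct_tmul (s : S) (f : M →ₗ[R] N) :
    LinearMap.tensorProduct R S M N (s ⊗ₜ f) = s • f.baseChange S :=
  rfl

theorem piRightHom_lTensor_evalFamily (v : ι → M) (x : S ⊗[R] (M →ₗ[R] N)) (i : ι) :
    TensorProduct.piRightHom R S S (fun _ ↦ N) ((evalFamily R N v).lTensor S x) i =
      LinearMap.tensorProduct R S M N x (1 ⊗ₜ v i) := by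
  induction x with
  | zero => simp
  | tmul s f => simp only [LinearMap.lTensor_tmul, TensorProduct.piRightHom_tmul, evalFamily_apply,
      linearMapTensorProduct_tmul, LinearMap.smul_apply, LinearMap.baseChange_tmul,
      TensorProduct.smul_tmul', smul_eq_mul, mul_one]
  | add x y hx hy => simp only [map_add, Pi.add_apply, LinearMap.add_apply, hx, hy]

variable (M N)

theorem linearMapTensorProduct_injective [Module.Flat R S] [Module.Finite R M] :
    Function.Injective (LinearMap.tensorProduct R S M N) := by
  obtain ⟨n, v, hv⟩ := Module.Finite.exists_fin (R := R) (M := M)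
  have lTensor_injective : Function.Injective ((evalFamily R N v).lTensor S) :=
    Module.Flat.lTensor_preserves_injective_linearMap _ (evalFamily_injective hv)
  intro x y hxy
  refine lTensor_injective ((TensorProduct.piRight R S S fun _ ↦ N).injective (funext fun i ↦ ?_))
  simp only [TensorProduct.piRight_apply, piRightHom_lTensor_evalFamily, hxy]

variable {S M N}

theorem injective_of_apply_one_tmul_eq_baseChange {P : Type*} [AddCommMonoid P] [Module R P]
    [Module.Flat R S] [Module.Finite R M] {ρ : P →ₗ[R] M →ₗ[R] N} (hρ : Function.Injective ρ)
    {Φ : S ⊗[R] P →ₗ[S] S ⊗[R] M →ₗ[S] S ⊗[R] N} (hΦ : ∀ p, Φ (1 ⊗ₜ p) = (ρ p).baseChange S) :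
    Function.Injective Φ := by
  have factorization : Φ = LinearMap.tensorProduct R S M N ∘ₗ ρ.baseChange S := by
    ext p m
    simp [hΦ, linearMapTensorProduct_tmul, -LinearMap.tensorProduct_apply]
  have injective_baseChange : Function.Injective (ρ.baseChange S) :=
    Module.Flat.lTensor_preserves_injective_linearMap ρ hρ
  rw [factorization]
  exact (linearMapTensorProduct_injective S M N).comp injective_baseChange

end LinearMaps

theorem range_eq_adjoin_one_tmul_image {R S B C : Type*} [CommSemiring R] [CommSemiring S]
    [Algebra R S] [Semiring B] [Algebra R B] [Semiring C] [Algebra S C]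
    (Φ : S ⊗[R] B →ₐ[S] C) {s : Set B} (hs : Algebra.adjoin R s = ⊤) :
    Φ.range = Algebra.adjoin S ((fun b ↦ Φ (1 ⊗ₜ b)) '' s) := by
  rw [← Algebra.map_top, ← Algebra.TensorProduct.adjoin_one_tmul_image_eq_top s hs,
    AlgHom.map_adjoin, Set.image_image]

theorem heckeAlgebra_baseChange_general
    (R S M : Type*) [CommSemiring R] [CommSemiring S] [Algebra R S] [Module.Flat R S]
    [AddCommMonoid M] [Module R M] [Module.Finite R M]
    {ι : Type*} (T : ι → Module.End R M)
    (Φ : S ⊗[R] Algebra.adjoin R (Set.range T) →ₐ[S] Module.End S (S ⊗[R] M))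
    (hΦ : ∀ t : Algebra.adjoin R (Set.range T),
      Φ (1 ⊗ₜ t) = (t : Module.End R M).baseChange S) :
    Function.Injective Φ ∧
      Φ.range = Algebra.adjoin S (Set.range fun i ↦ (T i).baseChange S) := by
  constructor
  · exact injective_of_apply_one_tmul_eq_baseChange
      (ρ := (Algebra.adjoin R (Set.range T)).val.toLinearMap) (Φ := Φ.toLinearMap)
      Subtype.val_injective hΦ
  · have image_generators : (fun t : Algebra.adjoin R (Set.range T) ↦ Φ (1 ⊗ₜ t)) ''
        (Subtype.val ⁻¹' Set.range T) = Set.range fun i ↦ (T i).baseChange S := by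
      simp only [hΦ]
      rw [← Set.image_image (LinearMap.baseChange S) Subtype.val,
        Set.image_preimage_eq_of_subset (by simp [Algebra.subset_adjoin])]
      exact (Set.range_comp _ T).symm
    rw [range_eq_adjoin_one_tmul_image Φ Algebra.adjoin_adjoin_coe_preimage, image_generators]

set_option synthInstance.maxHeartbeats 1000000 in
/-- Base change of Hecke algebras. Let `R` be a Noetherian commutative ring, `S` a flat
commutative `R`-algebra, `M` a finitely generated `R`-module, and `(Tᵢ)` a family of
`R`-linear endomorphisms of `M`. Let `𝕋_R ⊆ End_R(M)` be the `R`-subalgebra generated by the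
`Tᵢ`, and `𝕋_S ⊆ End_S(S ⊗_R M)` the `S`-subalgebra generated by the base changes of the
`Tᵢ`. Then the canonical `S`-algebra homomorphism `𝕋_R ⊗_R S → End_S(S ⊗_R M)` (determined
by `T ⊗ 1 ↦ id_S ⊗ T`) is injective with image `𝕋_S`; in particular
`𝕋_R ⊗_R S ≅ 𝕋_S` as `S`-algebras. -/
theorem heckeAlgebra_baseChange
    (R S M : Type*) [CommRing R] [IsNoetherianRing R] [CommRing S] [Algebra R S]
    [Module.Flat R S] [AddCommGroup M] [Module R M] [Module.Finite R M]
    {ι : Type*} (T : ι → Module.End R M)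
    (Φ : (S ⊗[R] (Algebra.adjoin R (Set.range T) : Subalgebra R (Module.End R M))) →ₐ[S]
      Module.End S (S ⊗[R] M))
    (hΦ : ∀ t : (Algebra.adjoin R (Set.range T) : Subalgebra R (Module.End R M)),
      Φ ((1 : S) ⊗ₜ[R] t) = LinearMap.baseChange S (t : Module.End R M)) :
    Function.Injective Φ ∧
      Φ.range = Algebra.adjoin S (Set.range fun i =>
        (LinearMap.baseChange S (T i) : Module.End S (S ⊗[R] M))) :=
  heckeAlgebra_baseChange_general R S M T Φ hΦ
end
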